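/- arXiv:1709.00210 — 2 statements merged into one kernel-verified Lean document; each statement's English description precedes it below -/
import Mathlib

section
/- Let α = 1/2, define Q : [0,∞) → ℝ by Q(t) = 1000 for t ∈ [0,1000] and Q(t) = 1000²/t for t ≥ 1000, and let g(t) = 1/(1 + t^{1/2}). Then for every x₀ ∈ ℝ, the unique solution φ ∈ C⁰_{1/2}([0,∞), ℝ) of the integral equation φ(t) = t^{-1/2} E_{1/2,1/2}(-t^{1/2}) x₀ + ∫₀^t (t-τ)^{-1/2} E_{1/2,1/2}(-(t-τ)^{1/2}) ( Q(τ) φ(τ) + g(τ) ) dτ (the variation-of-constants form of D^{1/2}_{0+} x = -x + Q(t)x + g(t) with lim_{t→0⁺} t^{1/2} x(t) = x₀) satisfies lim_{t→∞} φ(t) = 0. -/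
open Filter Topology MeasureTheory

/-- The scalar Mittag-Leffler function `E_{α,β}(z) = ∑ zᵏ / Γ(αk + β)`. -/
noncomputable def mlScalar (α β z : ℝ) : ℝ :=
  ∑' k : ℕ, z ^ k / Real.Gamma (α * k + β)

/-- Membership in `C⁰_{1/2}([0,∞), ℝ)`: continuous on `(0,∞)`, the limit
`lim_{t→0⁺} t^{1/2} x(t)` exists, and `sup_{t≥0} t^{1/2} |x(t)| < ∞`. -/
def memC0half (x : ℝ → ℝ) : Prop :=
  ContinuousOn x (Set.Ioi 0) ∧
  (∃ l : ℝ, Tendsto (fun t : ℝ => t ^ ((1:ℝ)/2) * x t) (𝓝[>] 0) (𝓝 l)) ∧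
  (∃ C : ℝ, ∀ t : ℝ, 0 ≤ t → t ^ ((1:ℝ)/2) * |x t| ≤ C)

/-- `Q(t) = 1000` for `t ∈ [0,1000]` and `Q(t) = 1000²/t` for `t ≥ 1000`. -/
noncomputable def Qex (t : ℝ) : ℝ := if t ≤ 1000 then 1000 else 1000 ^ 2 / t

/-!
For `y t = √t * x t` the variation-of-constants equation becomes `y = x₀ • e + V (Q * y + h)` on
bounded continuous functions, where `e t = E_{1/2,1/2}(-√t)`, `h t = √t * g t` and `V` is the
rescaled convolution with `s ^ (-1/2) * e s`. Splitting the series of `e` by parity expresses it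
through incomplete Gamma functions, which yields `|e s| ≤ 1 / (1 + s)`; this decay makes `V`
bounded.

`Q` may be large, but it tends to `0`, so `|Q τ| ≤ δ + B * exp (-τ)` with `δ` as small as desired.
The `δ`-part contributes a small multiple of the norm of `V`. In the norm with weight
`w t = exp (-L * exp (-t))` the remaining part contributes a multiple of `1 / L`, once the kernel
singularities are absorbed by Young's inequality. Hence `V ∘ Q` is a contraction for an equivalent
norm, the equation has a unique bounded solution `y`, and `x t = y t / √t` tends to `0`.
-/

section IncompleteGamma

/-- The lower incomplete gamma function `γ(a, t) = ∫₀ᵗ e⁻ˢ sᵃ⁻¹ ds`. -/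
noncomputable def lowerGamma (a t : ℝ) : ℝ :=
  ∫ s in (0 : ℝ)..t, Real.exp (-s) * s ^ (a - 1)

/-- The upper incomplete gamma function `Γ(a, t) = ∫ₜ^∞ e⁻ˢ sᵃ⁻¹ ds`. -/
noncomputable def upperGamma (a t : ℝ) : ℝ :=
  ∫ s in Set.Ioi t, Real.exp (-s) * s ^ (a - 1)

variable {a t : ℝ}

lemma intervalIntegrable_exp_neg_mul_rpow (ha : 0 < a) (b c : ℝ) :
    IntervalIntegrable (fun s : ℝ ↦ Real.exp (-s) * s ^ (a - 1)) volume b c :=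
  (intervalIntegral.intervalIntegrable_rpow' (by linarith)).continuousOn_mul (by fun_prop)

lemma continuous_lowerGamma (ha : 0 < a) : Continuous (lowerGamma a) :=
  intervalIntegral.continuous_primitive (intervalIntegrable_exp_neg_mul_rpow ha) 0

lemma lowerGamma_nonneg (ht : 0 ≤ t) : 0 ≤ lowerGamma a t :=
  intervalIntegral.integral_nonneg ht fun _ hs ↦
    mul_nonneg (Real.exp_nonneg _) (Real.rpow_nonneg hs.1 _)

lemma partialGamma_ofReal (ht : 0 ≤ t) : Complex.partialGamma a t = lowerGamma a t := by
  rw [Complex.partialGamma, lowerGamma, ← intervalIntegral.integral_ofReal]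
  refine intervalIntegral.integral_congr fun s hs ↦ ?_
  rw [Set.uIcc_of_le ht] at hs
  push_cast [Complex.ofReal_cpow hs.1]
  rfl

lemma lowerGamma_add_one (ha : 0 < a) (ht : 0 ≤ t) :
    lowerGamma (a + 1) t = a * lowerGamma a t - Real.exp (-t) * t ^ a := by
  have h := Complex.partialGamma_add_one (s := a) (by simpa using ha) ht
  rw [partialGamma_ofReal ht, ← Complex.ofReal_one, ← Complex.ofReal_add, partialGamma_ofReal ht,
    ← Complex.ofReal_cpow ht] at h
  exact_mod_cast h

lemma lowerGamma_add_natCast_le (ha : 0 < a) (ht : 0 ≤ t) (n : ℕ) :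
    lowerGamma (a + n) t ≤ t ^ n * lowerGamma a t := by
  have : (0 : ℝ) ≤ n := n.cast_nonneg
  rw [lowerGamma, lowerGamma, ← intervalIntegral.integral_const_mul]
  refine intervalIntegral.integral_mono_on_of_le_Ioo ht
    (intervalIntegrable_exp_neg_mul_rpow (by linarith) 0 t)
    ((intervalIntegrable_exp_neg_mul_rpow ha 0 t).const_mul _) fun s hs ↦ ?_
  have hs0 : 0 < s := hs.1
  have hsplit : s ^ (a + n - 1) = s ^ n * s ^ (a - 1) := by
    rw [← Real.rpow_natCast, ← Real.rpow_add hs0]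
    ring_nf
  calc Real.exp (-s) * s ^ (a + n - 1) = s ^ n * (Real.exp (-s) * s ^ (a - 1)) := by
        rw [hsplit]; ring
    _ ≤ t ^ n * (Real.exp (-s) * s ^ (a - 1)) := by gcongr; exact hs.2.le

lemma sum_range_rpow_div_Gamma (ha : 0 < a) (ht : 0 ≤ t) (N : ℕ) :
    ∑ n ∈ Finset.range N, t ^ (a + n) / Real.Gamma (a + n + 1) =
      Real.exp t * (lowerGamma a t / Real.Gamma a - lowerGamma (a + N) t / Real.Gamma (a + N)) := by
  induction N with
  | zero => simp
  | succ N ih =>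
    have haN : 0 < a + N := by positivity
    have := Real.Gamma_pos_of_pos haN
    rw [Finset.sum_range_succ, ih, Nat.cast_succ, ← add_assoc, lowerGamma_add_one haN ht,
      Real.Gamma_add_one haN.ne', Real.exp_neg]
    field_simp
    ring

lemma summable_rpow_div_Gamma (ha : 0 < a) (ht : 0 ≤ t) :
    Summable fun n : ℕ ↦ t ^ (a + n) / Real.Gamma (a + n + 1) := by
  refine summable_of_sum_range_le (c := Real.exp t * (lowerGamma a t / Real.Gamma a))
    (fun n ↦ ?_) fun N ↦ ?_
  · have := Real.Gamma_pos_of_pos (show 0 < a + n + 1 by positivity)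
    positivity
  · rw [sum_range_rpow_div_Gamma ha ht]
    have := Real.Gamma_pos_of_pos (show 0 < a + N by positivity)
    have := lowerGamma_nonneg (a := a + N) ht
    gcongr
    exact sub_le_self _ (by positivity)

lemma tendsto_lowerGamma_div_Gamma_atTop (ha : 0 < a) (ht : 0 < t) :
    Tendsto (fun n : ℕ ↦ lowerGamma (a + n) t / Real.Gamma (a + n)) atTop (𝓝 0) := by
  rw [← tendsto_add_atTop_iff_nat 1]
  have hterms := (summable_rpow_div_Gamma ha ht.le).tendsto_atTop_zero.mul_const
    (t ^ (1 - a) * lowerGamma a t)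
  rw [zero_mul] at hterms
  have hΓ (n : ℕ) : 0 < Real.Gamma (a + (n + 1 : ℕ)) := Real.Gamma_pos_of_pos (by positivity)
  refine squeeze_zero (fun n ↦ div_nonneg (lowerGamma_nonneg ht.le) (hΓ n).le)
    (fun n ↦ ?_) hterms
  have hpow : t ^ (n + 1) = t ^ (a + n) * t ^ (1 - a) := by
    rw [← Real.rpow_natCast, ← Real.rpow_add ht]
    push_cast
    ring_nf
  calc lowerGamma (a + (n + 1 : ℕ)) t / Real.Gamma (a + (n + 1 : ℕ))
      ≤ t ^ (n + 1) * lowerGamma a t / Real.Gamma (a + (n + 1 : ℕ)) :=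
        div_le_div_of_nonneg_right (lowerGamma_add_natCast_le ha ht.le _) (hΓ n).le
    _ = t ^ (a + n) / Real.Gamma (a + n + 1) * (t ^ (1 - a) * lowerGamma a t) := by
        rw [hpow]; push_cast; ring_nf

lemma hasSum_rpow_div_Gamma (ha : 0 < a) (ht : 0 < t) :
    HasSum (fun n : ℕ ↦ t ^ (a + n) / Real.Gamma (a + n + 1))
      (Real.exp t * (lowerGamma a t / Real.Gamma a)) := by
  refine (summable_rpow_div_Gamma ha ht.le).hasSum_iff_tendsto_nat.2 ?_
  simp only [sum_range_rpow_div_Gamma ha ht.le]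
  simpa using ((tendsto_lowerGamma_div_Gamma_atTop ha ht).const_sub _).const_mul (Real.exp t)

lemma integrableOn_exp_neg_mul_rpow_Ioi (ha : 0 < a) (ht : 0 ≤ t) :
    IntegrableOn (fun s : ℝ ↦ Real.exp (-s) * s ^ (a - 1)) (Set.Ioi t) :=
  (Real.GammaIntegral_convergent ha).mono_set (Set.Ioi_subset_Ioi ht)

lemma lowerGamma_add_upperGamma (ha : 0 < a) (ht : 0 ≤ t) :
    lowerGamma a t + upperGamma a t = Real.Gamma a := by
  rw [Real.Gamma_eq_integral ha]
  exact intervalIntegral.integral_interval_add_Ioi (integrableOn_exp_neg_mul_rpow_Ioi ha le_rfl)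
    (integrableOn_exp_neg_mul_rpow_Ioi ha ht)

lemma integrableOn_exp_neg_mul_rpow_mul_one_add_div (ha : 0 < a) (ha1 : a ≤ 1) (ht : 0 < t) :
    IntegrableOn (fun s : ℝ ↦ Real.exp (-s) * s ^ (a - 1) * (1 + (1 - a) / s)) (Set.Ioi t) := by
  refine Integrable.mono' ((integrableOn_exp_neg_mul_rpow_Ioi ha ht.le).mul_const (1 + (1 - a) / t))
    (by fun_prop : Measurable _).aestronglyMeasurable
    (ae_restrict_of_forall_mem measurableSet_Ioi fun s hs ↦ ?_)
  have hs0 : 0 < s := ht.trans hs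
  have : 0 ≤ 1 - a := by linarith
  rw [Real.norm_of_nonneg (by positivity)]
  gcongr
  exact le_of_lt hs

lemma integral_exp_neg_mul_rpow_mul_one_add_div (ha : 0 < a) (ha1 : a ≤ 1) (ht : 0 < t) :
    ∫ s in Set.Ioi t, Real.exp (-s) * s ^ (a - 1) * (1 + (1 - a) / s) =
      Real.exp (-t) * t ^ (a - 1) := by
  have hderiv : ∀ s ∈ Set.Ici t, HasDerivAt (fun s : ℝ ↦ -(Real.exp (-s) * s ^ (a - 1)))
      (Real.exp (-s) * s ^ (a - 1) * (1 + (1 - a) / s)) s := by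
    intro s hs
    have hs0 : 0 < s := ht.trans_le hs
    refine (((hasDerivAt_neg s).exp.mul
      (Real.hasDerivAt_rpow_const (Or.inl hs0.ne'))).neg).congr_deriv ?_
    rw [Real.rpow_sub_one hs0.ne' (a - 1)]
    field_simp
    ring
  have hlim : Tendsto (fun s : ℝ ↦ -(Real.exp (-s) * s ^ (a - 1))) atTop (𝓝 0) := by
    simpa [mul_comm] using (tendsto_rpow_mul_exp_neg_mul_atTop_nhds_zero (a - 1) 1 one_pos).neg
  rw [integral_Ioi_of_hasDerivAt_of_tendsto' hderiv
    (integrableOn_exp_neg_mul_rpow_mul_one_add_div ha ha1 ht) hlim]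
  ring

lemma upperGamma_le (ha : 0 < a) (ha1 : a ≤ 1) (ht : 0 < t) :
    upperGamma a t ≤ Real.exp (-t) * t ^ (a - 1) := by
  rw [← integral_exp_neg_mul_rpow_mul_one_add_div ha ha1 ht]
  refine setIntegral_mono_on (integrableOn_exp_neg_mul_rpow_Ioi ha ht.le)
    (integrableOn_exp_neg_mul_rpow_mul_one_add_div ha ha1 ht) measurableSet_Ioi fun s hs ↦ ?_
  have hs0 : 0 < s := ht.trans hs
  have : 0 ≤ (1 - a) / s := div_nonneg (by linarith) hs0.le
  exact le_mul_of_one_le_right (by positivity) (by linarith)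

lemma le_one_add_div_mul_upperGamma (ha : 0 < a) (ha1 : a ≤ 1) (ht : 0 < t) :
    Real.exp (-t) * t ^ (a - 1) ≤ (1 + (1 - a) / t) * upperGamma a t := by
  rw [← integral_exp_neg_mul_rpow_mul_one_add_div ha ha1 ht, mul_comm, upperGamma,
    ← integral_mul_const]
  refine setIntegral_mono_on (integrableOn_exp_neg_mul_rpow_mul_one_add_div ha ha1 ht)
    ((integrableOn_exp_neg_mul_rpow_Ioi ha ht.le).mul_const _) measurableSet_Ioi fun s hs ↦ ?_
  have hs0 : 0 < s := ht.trans hs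
  have : 0 ≤ 1 - a := by linarith
  gcongr
  exact le_of_lt hs

end IncompleteGamma

section MittagLeffler

variable {t : ℝ}

lemma hasSum_mlScalar_half_half_even (ht : 0 < t) :
    HasSum (fun k : ℕ ↦ (-√t) ^ (2 * k) / Real.Gamma (1 / 2 * (2 * k : ℕ) + 1 / 2))
      (√t * (Real.exp t * (lowerGamma (1 / 2) t / √Real.pi)) + 1 / √Real.pi) := by
  have hsum : HasSum (fun k : ℕ ↦ t ^ (k + 1) / Real.Gamma ((k + 1 : ℕ) + 1 / 2))
      (√t * (Real.exp t * (lowerGamma (1 / 2) t / √Real.pi))) := by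
    rw [← Real.Gamma_one_half_eq]
    refine ((hasSum_rpow_div_Gamma one_half_pos ht).mul_left √t).congr_fun fun k ↦ ?_
    rw [Real.sqrt_eq_rpow, ← mul_div_assoc, ← Real.rpow_add ht, ← Real.rpow_natCast]
    push_cast
    ring_nf
  have hsum' := (hasSum_nat_add_iff (f := fun k : ℕ ↦ t ^ k / Real.Gamma (k + 1 / 2)) 1).1 hsum
  rw [Finset.sum_range_one, pow_zero, Nat.cast_zero, zero_add, Real.Gamma_one_half_eq] at hsum'
  refine hsum'.congr_fun fun k ↦ ?_
  rw [pow_mul, neg_sq, Real.sq_sqrt ht.le]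
  push_cast
  ring_nf

lemma hasSum_mlScalar_half_half_odd (ht : 0 ≤ t) :
    HasSum (fun k : ℕ ↦ (-√t) ^ (2 * k + 1) / Real.Gamma (1 / 2 * (2 * k + 1 : ℕ) + 1 / 2))
      (-√t * Real.exp t) := by
  have hexp : HasSum (fun k : ℕ ↦ t ^ k / (k.factorial : ℝ)) (Real.exp t) := by
    rw [Real.exp_eq_exp_ℝ]
    exact NormedSpace.expSeries_div_hasSum_exp t
  refine (hexp.mul_left (-√t)).congr_fun fun k ↦ ?_
  have harg : (1 / 2 * (2 * k + 1 : ℕ) + 1 / 2 : ℝ) = k + 1 := by push_cast; ring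
  rw [pow_succ, pow_mul, neg_sq, Real.sq_sqrt ht, harg, Real.Gamma_nat_eq_factorial]
  ring

lemma mlScalar_half_half_neg_sqrt (t : ℝ) :
    mlScalar (1 / 2) (1 / 2) (-√t) =
      1 / √Real.pi - √t * Real.exp t * (1 - lowerGamma (1 / 2) t / √Real.pi) := by
  rcases le_or_gt t 0 with ht | ht
  · rw [mlScalar, Real.sqrt_eq_zero_of_nonpos ht, tsum_eq_single 0 fun k hk ↦ by simp [hk]]
    norm_num [Real.Gamma_one_half_eq]
  · have hsum := HasSum.even_add_odd
      (f := fun k : ℕ ↦ (-√t) ^ k / Real.Gamma (1 / 2 * (k : ℝ) + 1 / 2))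
      (hasSum_mlScalar_half_half_even ht) (hasSum_mlScalar_half_half_odd ht.le)
    rw [mlScalar, hsum.tsum_eq]
    ring

lemma continuous_mlScalar_half_half_neg_sqrt :
    Continuous fun t ↦ mlScalar (1 / 2) (1 / 2) (-√t) := by
  have := continuous_lowerGamma one_half_pos
  simp only [mlScalar_half_half_neg_sqrt]
  fun_prop

lemma mlScalar_half_half_neg_sqrt_eq_upperGamma (ht : 0 ≤ t) :
    mlScalar (1 / 2) (1 / 2) (-√t) =
      (1 - √t * Real.exp t * upperGamma (1 / 2) t) / √Real.pi := by
  have hΓ := lowerGamma_add_upperGamma one_half_pos ht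
  rw [Real.Gamma_one_half_eq] at hΓ
  rw [mlScalar_half_half_neg_sqrt, eq_sub_of_add_eq hΓ]
  field_simp
  ring

lemma abs_mlScalar_half_half_neg_sqrt_le (ht : 0 ≤ t) :
    |mlScalar (1 / 2) (1 / 2) (-√t)| ≤ 1 / (1 + t) := by
  have hπ : 1 ≤ √Real.pi := Real.one_le_sqrt.2 (by linarith [Real.pi_gt_three])
  rw [mlScalar_half_half_neg_sqrt_eq_upperGamma ht]
  rcases ht.eq_or_lt with rfl | ht
  · simpa [abs_of_pos (zero_lt_one.trans_le hπ)] using inv_le_one_of_one_le₀ hπ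
  set X := √t * Real.exp t * upperGamma (1 / 2) t
  have hone : √t * Real.exp t * (Real.exp (-t) * t ^ ((1 / 2 : ℝ) - 1)) = 1 := by
    rw [Real.exp_neg, Real.rpow_sub_one ht.ne', ← Real.sqrt_eq_rpow]
    field_simp
    exact Real.sq_sqrt ht.le
  have hX_le : X ≤ 1 := hone ▸ mul_le_mul_of_nonneg_left
    (upperGamma_le one_half_pos one_half_lt_one.le ht) (by positivity)
  have hX_ge : 2 * t ≤ (2 * t + 1) * X := by
    have h := mul_le_mul_of_nonneg_left
      (le_one_add_div_mul_upperGamma one_half_pos one_half_lt_one.le ht)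
      (show 0 ≤ √t * Real.exp t by positivity)
    rw [hone, mul_left_comm] at h
    calc 2 * t = 2 * t * 1 := (mul_one _).symm
      _ ≤ 2 * t * ((1 + (1 - 1 / 2) / t) * X) := by gcongr
      _ = (2 * t + 1) * X := by field_simp; ring
  rw [abs_of_nonneg (div_nonneg (by linarith) (by linarith))]
  calc (1 - X) / √Real.pi ≤ 1 - X := div_le_self (by linarith) hπ
    _ ≤ 1 / (1 + t) := by
        rw [le_div_iff₀ (by positivity)]
        nlinarith

end MittagLeffler

section EndpointMajorant

/-- The power `uᵃ`, integrable at `0` for `-1 < a`, damped by `1 / (1 + u)` so as to be integrable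
at `∞` for `a < 0`. -/
noncomputable def dampedRpow (a u : ℝ) : ℝ := u ^ a / (1 + u)

/-- A majorant on `(0, t)` of `τ ↦ (τᵃ + (t - τ)ᵃ) / (1 + (t - τ))`, singular at both endpoints,
whose integral is bounded uniformly in `t`. -/
noncomputable def endpointMajorant (a t τ : ℝ) : ℝ := dampedRpow a τ + 2 * dampedRpow a (t - τ)

variable {a t τ : ℝ}

lemma dampedRpow_nonneg {u : ℝ} (hu : 0 ≤ u) : 0 ≤ dampedRpow a u := by
  unfold dampedRpow
  positivity

lemma endpointMajorant_nonneg (hτ : 0 ≤ τ) (hτt : τ ≤ t) : 0 ≤ endpointMajorant a t τ :=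
  add_nonneg (dampedRpow_nonneg hτ)
    (mul_nonneg zero_le_two (dampedRpow_nonneg (sub_nonneg.2 hτt)))

lemma integral_dampedRpow_nonneg (a : ℝ) : 0 ≤ ∫ u in Set.Ioi 0, dampedRpow a u :=
  setIntegral_nonneg measurableSet_Ioi fun _ hu ↦ dampedRpow_nonneg (le_of_lt hu)

lemma integrableOn_dampedRpow (ha : -1 < a) (ha0 : a < 0) :
    IntegrableOn (dampedRpow a) (Set.Ioi 0) := by
  have hmeas : Measurable (dampedRpow a) := by
    unfold dampedRpow
    fun_prop
  rw [← Set.Ioc_union_Ioi_eq_Ioi (zero_le_one' ℝ)]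
  refine IntegrableOn.union ?_ ?_
  · refine Integrable.mono' (intervalIntegral.intervalIntegrable_rpow' (a := 0) (b := 1) ha).1
      hmeas.aestronglyMeasurable (ae_restrict_of_forall_mem measurableSet_Ioc fun u hu ↦ ?_)
    have hu0 : 0 < u := hu.1
    rw [Real.norm_of_nonneg (dampedRpow_nonneg hu0.le)]
    exact div_le_self (by positivity) (by linarith)
  · refine Integrable.mono' (integrableOn_Ioi_rpow_of_lt (show a - 1 < -1 by linarith) one_pos)
      hmeas.aestronglyMeasurable (ae_restrict_of_forall_mem measurableSet_Ioi fun u hu ↦ ?_)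
    have hu0 : 0 < u := one_pos.trans hu
    rw [Real.norm_of_nonneg (dampedRpow_nonneg hu0.le), Real.rpow_sub_one hu0.ne']
    exact div_le_div_of_nonneg_left (by positivity) hu0 (by linarith)

lemma intervalIntegrable_dampedRpow (ha : -1 < a) (ha0 : a < 0) (ht : 0 ≤ t) :
    IntervalIntegrable (dampedRpow a) volume 0 t :=
  (intervalIntegrable_iff_integrableOn_Ioc_of_le ht).2
    ((integrableOn_dampedRpow ha ha0).mono_set Set.Ioc_subset_Ioi_self)

lemma intervalIntegrable_dampedRpow_sub (ha : -1 < a) (ha0 : a < 0) (ht : 0 ≤ t) :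
    IntervalIntegrable (fun τ ↦ dampedRpow a (t - τ)) volume 0 t := by
  simpa using ((intervalIntegrable_dampedRpow ha ha0 ht).comp_sub_left t).symm

lemma intervalIntegrable_endpointMajorant (ha : -1 < a) (ha0 : a < 0) (ht : 0 ≤ t) :
    IntervalIntegrable (endpointMajorant a t) volume 0 t :=
  (intervalIntegrable_dampedRpow ha ha0 ht).add
    ((intervalIntegrable_dampedRpow_sub ha ha0 ht).const_mul 2)

lemma integral_endpointMajorant_le (ha : -1 < a) (ha0 : a < 0) (ht : 0 ≤ t) :
    ∫ τ in (0 : ℝ)..t, endpointMajorant a t τ ≤ 3 * ∫ u in Set.Ioi 0, dampedRpow a u := by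
  have hle : ∫ u in (0 : ℝ)..t, dampedRpow a u ≤ ∫ u in Set.Ioi 0, dampedRpow a u := by
    rw [intervalIntegral.integral_of_le ht]
    exact setIntegral_mono_set (integrableOn_dampedRpow ha ha0)
      (ae_restrict_of_forall_mem measurableSet_Ioi fun u hu ↦ dampedRpow_nonneg (le_of_lt hu))
      Set.Ioc_subset_Ioi_self.eventuallyLE
  simp only [endpointMajorant]
  rw [intervalIntegral.integral_add (intervalIntegrable_dampedRpow ha ha0 ht)
      ((intervalIntegrable_dampedRpow_sub ha ha0 ht).const_mul 2),
    intervalIntegral.integral_const_mul, intervalIntegral.integral_comp_sub_left (dampedRpow a) t,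
    sub_self, sub_zero]
  linarith

lemma rpow_add_rpow_div_le_endpointMajorant (ha : a ≤ 0) (hτ : 0 < τ) (hτt : τ < t) :
    (τ ^ a + (t - τ) ^ a) / (1 + (t - τ)) ≤ endpointMajorant a t τ := by
  have hs : 0 < t - τ := sub_pos.2 hτt
  have hcross : τ ^ a / (1 + (t - τ)) ≤ dampedRpow a τ + dampedRpow a (t - τ) := by
    rcases le_total τ (t - τ) with h | h
    · have : τ ^ a / (1 + (t - τ)) ≤ dampedRpow a τ := by unfold dampedRpow; gcongr
      linarith [dampedRpow_nonneg (a := a) hs.le]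
    · have : τ ^ a / (1 + (t - τ)) ≤ dampedRpow a (t - τ) :=
        div_le_div_of_nonneg_right (Real.rpow_le_rpow_of_nonpos hs h ha) (by linarith)
      linarith [dampedRpow_nonneg (a := a) hτ.le]
  calc (τ ^ a + (t - τ) ^ a) / (1 + (t - τ))
      = τ ^ a / (1 + (t - τ)) + dampedRpow a (t - τ) := add_div ..
    _ ≤ endpointMajorant a t τ := by unfold endpointMajorant; linarith

lemma rpow_neg_half_mul_le {u δ q : ℝ} (hu : 0 < u) (hδ : 0 < δ) (hq : 0 ≤ q) :
    u ^ (-(1 : ℝ) / 2) * q ≤ δ * u ^ (-(3 : ℝ) / 4) + q ^ 3 / δ ^ 2 := by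
  obtain ⟨v, hv, hv2, hv3⟩ : ∃ v : ℝ, 0 < v ∧ u ^ (-(1 : ℝ) / 2) = v ^ 2 ∧
      u ^ (-(3 : ℝ) / 4) = v ^ 3 := by
    refine ⟨u ^ (-(1 : ℝ) / 4), by positivity, ?_, ?_⟩ <;>
    · rw [← Real.rpow_mul_natCast hu.le]
      norm_num
  rw [hv2, hv3]
  rcases le_total q (δ * v) with h | h
  · calc v ^ 2 * q ≤ v ^ 2 * (δ * v) := by gcongr
      _ = δ * v ^ 3 := by ring
      _ ≤ δ * v ^ 3 + q ^ 3 / δ ^ 2 := le_add_of_nonneg_right (by positivity)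
  · have hv_le : v ≤ q / δ := (le_div_iff₀' hδ).2 h
    calc v ^ 2 * q ≤ (q / δ) ^ 2 * q := by gcongr
      _ = q ^ 3 / δ ^ 2 := by ring
      _ ≤ δ * v ^ 3 + q ^ 3 / δ ^ 2 := le_add_of_nonneg_left (by positivity)

lemma rpow_neg_half_add_div_mul_le {δ q : ℝ} (hδ : 0 < δ) (hq : 0 ≤ q) (hτ : 0 < τ)
    (hτt : τ < t) :
    (τ ^ (-(1 : ℝ) / 2) + (t - τ) ^ (-(1 : ℝ) / 2)) / (1 + (t - τ)) * (δ + q) ≤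
      δ * (endpointMajorant (-1 / 2) t τ + endpointMajorant (-3 / 4) t τ) +
        2 * (q ^ 3 / δ ^ 2) := by
  have hs : 0 < t - τ := sub_pos.2 hτt
  have hyoung : (τ ^ (-(1 : ℝ) / 2) + (t - τ) ^ (-(1 : ℝ) / 2)) * q ≤
      δ * (τ ^ (-(3 : ℝ) / 4) + (t - τ) ^ (-(3 : ℝ) / 4)) + 2 * (q ^ 3 / δ ^ 2) := by
    linarith [rpow_neg_half_mul_le hτ hδ hq, rpow_neg_half_mul_le hs hδ hq]
  calc (τ ^ (-(1 : ℝ) / 2) + (t - τ) ^ (-(1 : ℝ) / 2)) / (1 + (t - τ)) * (δ + q)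
      = δ * ((τ ^ (-(1 : ℝ) / 2) + (t - τ) ^ (-(1 : ℝ) / 2)) / (1 + (t - τ))) +
        (τ ^ (-(1 : ℝ) / 2) + (t - τ) ^ (-(1 : ℝ) / 2)) * q / (1 + (t - τ)) := by ring
    _ ≤ δ * ((τ ^ (-(1 : ℝ) / 2) + (t - τ) ^ (-(1 : ℝ) / 2)) / (1 + (t - τ))) +
        (δ * (τ ^ (-(3 : ℝ) / 4) + (t - τ) ^ (-(3 : ℝ) / 4)) + 2 * (q ^ 3 / δ ^ 2)) /
          (1 + (t - τ)) := by gcongr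
    _ = δ * ((τ ^ (-(1 : ℝ) / 2) + (t - τ) ^ (-(1 : ℝ) / 2)) / (1 + (t - τ)) +
          (τ ^ (-(3 : ℝ) / 4) + (t - τ) ^ (-(3 : ℝ) / 4)) / (1 + (t - τ))) +
        2 * (q ^ 3 / δ ^ 2) / (1 + (t - τ)) := by ring
    _ ≤ δ * (endpointMajorant (-1 / 2) t τ + endpointMajorant (-3 / 4) t τ) +
        2 * (q ^ 3 / δ ^ 2) := by
      gcongr
      · exact rpow_add_rpow_div_le_endpointMajorant (by norm_num) hτ hτt
      · exact rpow_add_rpow_div_le_endpointMajorant (by norm_num) hτ hτt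
      · exact div_le_self (by positivity) (by linarith)

end EndpointMajorant

section RescaledConvolution

open scoped BoundedContinuousFunction

/-- The convolution of `s ↦ s ^ (-1/2) * e s` with `τ ↦ τ ^ (-1/2) * F τ` at `t`, multiplied by
`√t`. It is written after the substitution `τ = t * θ`, so that `t` enters the integrand only
through `e` and `F`; `rescaledConv_eq_integral` undoes the substitution. -/
noncomputable def rescaledConv (e F : ℝ → ℝ) (t : ℝ) : ℝ :=
  √t * ∫ θ in (0 : ℝ)..1, (1 - θ) ^ (-(1 : ℝ) / 2) * θ ^ (-(1 : ℝ) / 2) *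
    (e (t * (1 - θ)) * F (t * θ))

variable {t : ℝ}

lemma sqrt_mul_rpow_neg_half (ht : 0 < t) : √t * t ^ (-(1 : ℝ) / 2) = 1 := by
  rw [Real.sqrt_eq_rpow, ← Real.rpow_add ht]
  norm_num

lemma sqrt_add_mul_rpow_neg_half_le {s τ : ℝ} (hs : 0 < s) (hτ : 0 < τ) :
    √(τ + s) * (s ^ (-(1 : ℝ) / 2) * τ ^ (-(1 : ℝ) / 2)) ≤
      τ ^ (-(1 : ℝ) / 2) + s ^ (-(1 : ℝ) / 2) := by
  calc √(τ + s) * (s ^ (-(1 : ℝ) / 2) * τ ^ (-(1 : ℝ) / 2))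
      ≤ (√τ + √s) * (s ^ (-(1 : ℝ) / 2) * τ ^ (-(1 : ℝ) / 2)) := by
        gcongr
        simp only [Real.sqrt_eq_rpow]
        exact Real.rpow_add_le_add_rpow hτ.le hs.le (by norm_num) (by norm_num)
    _ = τ ^ (-(1 : ℝ) / 2) + s ^ (-(1 : ℝ) / 2) := by
        linear_combination s ^ (-(1 : ℝ) / 2) * sqrt_mul_rpow_neg_half hτ +
          τ ^ (-(1 : ℝ) / 2) * sqrt_mul_rpow_neg_half hs

lemma intervalIntegrable_one_sub_rpow_mul_rpow_neg_half :
    IntervalIntegrable (fun θ : ℝ ↦ (1 - θ) ^ (-(1 : ℝ) / 2) * θ ^ (-(1 : ℝ) / 2)) volume 0 1 := by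
  have hleft : IntervalIntegrable (fun θ : ℝ ↦ θ ^ (-(1 : ℝ) / 2)) volume 0 1 :=
    intervalIntegral.intervalIntegrable_rpow' (by norm_num)
  have hright : IntervalIntegrable (fun θ : ℝ ↦ (1 - θ) ^ (-(1 : ℝ) / 2)) volume 0 1 := by
    simpa using (hleft.comp_sub_left 1).symm
  rw [intervalIntegrable_iff_integrableOn_Ioo_of_le zero_le_one] at *
  refine Integrable.mono' (hleft.add hright) (by fun_prop : Measurable _).aestronglyMeasurable
    (ae_restrict_of_forall_mem measurableSet_Ioo fun θ hθ ↦ ?_)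
  have h0 : 0 < θ := hθ.1
  have h1 : 0 < 1 - θ := sub_pos.2 hθ.2
  rw [Real.norm_of_nonneg (by positivity)]
  simpa using sqrt_add_mul_rpow_neg_half_le h1 h0

lemma rescaledConv_of_nonpos (e F : ℝ → ℝ) (ht : t ≤ 0) : rescaledConv e F t = 0 := by
  rw [rescaledConv, Real.sqrt_eq_zero_of_nonpos ht, zero_mul]

lemma rescaledConv_eq_integral (e F : ℝ → ℝ) (ht : 0 < t) :
    rescaledConv e F t = √t * ∫ τ in (0 : ℝ)..t,
      (t - τ) ^ (-(1 : ℝ) / 2) * e (t - τ) * (τ ^ (-(1 : ℝ) / 2) * F τ) := by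
  have hsubst := intervalIntegral.mul_integral_comp_mul_left (a := 0) (b := 1)
    (f := fun τ : ℝ ↦ (t - τ) ^ (-(1 : ℝ) / 2) * e (t - τ) * (τ ^ (-(1 : ℝ) / 2) * F τ)) t
  rw [mul_zero, mul_one] at hsubst
  rw [rescaledConv, ← hsubst]
  congr 1
  rw [← intervalIntegral.integral_const_mul]
  refine intervalIntegral.integral_congr fun θ hθ ↦ ?_
  rw [Set.uIcc_of_le zero_le_one] at hθ
  have hcancel : t * (t ^ (-(1 : ℝ) / 2) * t ^ (-(1 : ℝ) / 2)) = 1 := by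
    rw [← Real.rpow_add ht, add_halves, Real.rpow_neg_one, mul_inv_cancel₀ ht.ne']
  simp only [show t - t * θ = t * (1 - θ) by ring]
  rw [Real.mul_rpow ht.le (sub_nonneg.2 hθ.2), Real.mul_rpow ht.le hθ.1]
  linear_combination (-((1 - θ) ^ (-(1 : ℝ) / 2) * θ ^ (-(1 : ℝ) / 2) *
    (e (t * (1 - θ)) * F (t * θ)))) * hcancel

lemma rescaledConv_congr (e : ℝ → ℝ) {F G : ℝ → ℝ} (hFG : Set.EqOn F G (Set.Ioi 0)) :
    rescaledConv e F = rescaledConv e G := by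
  funext t
  rcases le_or_gt t 0 with ht | ht
  · rw [rescaledConv_of_nonpos e F ht, rescaledConv_of_nonpos e G ht]
  · rw [rescaledConv_eq_integral e F ht, rescaledConv_eq_integral e G ht]
    congr 1
    refine intervalIntegral.integral_congr_ae (Eventually.of_forall fun τ hτ ↦ ?_)
    rw [Set.uIoc_of_le ht.le] at hτ
    rw [hFG hτ.1]

lemma intervalIntegrable_rescaledConv {e F : ℝ → ℝ} (he : Continuous e) (hF : Continuous F)
    (t : ℝ) :
    IntervalIntegrable (fun θ : ℝ ↦ (1 - θ) ^ (-(1 : ℝ) / 2) * θ ^ (-(1 : ℝ) / 2) *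
      (e (t * (1 - θ)) * F (t * θ))) volume 0 1 :=
  intervalIntegrable_one_sub_rpow_mul_rpow_neg_half.mul_continuousOn (by fun_prop)

lemma continuous_rescaledConv (e F : ℝ →ᵇ ℝ) : Continuous (rescaledConv e F) := by
  refine Real.continuous_sqrt.mul (intervalIntegral.continuous_of_dominated_interval
    (bound := fun θ ↦ ‖(1 - θ) ^ (-(1 : ℝ) / 2) * θ ^ (-(1 : ℝ) / 2)‖ * (‖e‖ * ‖F‖))
    (fun t ↦ ?_) (fun t ↦ Eventually.of_forall fun θ _ ↦ ?_) ?_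
    (Eventually.of_forall fun θ _ ↦ by fun_prop))
  · rw [Set.uIoc_of_le zero_le_one]
    exact (intervalIntegrable_rescaledConv e.continuous F.continuous t).1.aestronglyMeasurable
  · rw [norm_mul, norm_mul (e _)]
    gcongr
    exacts [e.norm_coe_le_norm _, F.norm_coe_le_norm _]
  · exact intervalIntegrable_one_sub_rpow_mul_rpow_neg_half.norm.mul_const _

lemma nonneg_of_abs_le_div_one_add {e : ℝ → ℝ} {C : ℝ} (he : ∀ s > 0, |e s| ≤ C / (1 + s)) :
    0 ≤ C := by
  linarith [(abs_nonneg _).trans (he 1 one_pos)]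

lemma abs_rescaledConv_le {e F G : ℝ → ℝ} {C : ℝ} (he : ∀ s > 0, |e s| ≤ C / (1 + s))
    (ht : 0 < t) (hG : IntervalIntegrable G volume 0 t)
    (hFG : ∀ τ, 0 < τ → τ < t →
      (τ ^ (-(1 : ℝ) / 2) + (t - τ) ^ (-(1 : ℝ) / 2)) / (1 + (t - τ)) * |F τ| ≤ G τ) :
    |rescaledConv e F t| ≤ C * ∫ τ in (0 : ℝ)..t, G τ := by
  have hC := nonneg_of_abs_le_div_one_add he
  rw [rescaledConv_eq_integral e F ht, ← intervalIntegral.integral_const_mul,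
    ← intervalIntegral.integral_const_mul, ← Real.norm_eq_abs]
  refine intervalIntegral.norm_integral_le_of_norm_le ht.le ?_ (hG.const_mul C)
  filter_upwards [Measure.ae_ne volume t] with τ hτt hτ
  have h0 : 0 < τ := hτ.1
  have hlt : τ < t := hτ.2.lt_of_ne hτt
  have hs : 0 < t - τ := sub_pos.2 hlt
  have hkernel := sqrt_add_mul_rpow_neg_half_le hs h0
  rw [add_sub_cancel] at hkernel
  calc ‖√t * ((t - τ) ^ (-(1 : ℝ) / 2) * e (t - τ) * (τ ^ (-(1 : ℝ) / 2) * F τ))‖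
      = √t * ((t - τ) ^ (-(1 : ℝ) / 2) * τ ^ (-(1 : ℝ) / 2)) * |e (t - τ)| * |F τ| := by
        simp only [Real.norm_eq_abs, abs_mul, abs_of_nonneg (Real.sqrt_nonneg t),
          abs_of_nonneg (Real.rpow_nonneg hs.le _), abs_of_nonneg (Real.rpow_nonneg h0.le _)]
        ring
    _ ≤ (τ ^ (-(1 : ℝ) / 2) + (t - τ) ^ (-(1 : ℝ) / 2)) * (C / (1 + (t - τ))) * |F τ| := by
        gcongr
        exact he _ hs
    _ = C * ((τ ^ (-(1 : ℝ) / 2) + (t - τ) ^ (-(1 : ℝ) / 2)) / (1 + (t - τ)) * |F τ|) := by ring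
    _ ≤ C * G τ := by
        gcongr
        exact hFG τ h0 hlt

variable {e : ℝ →ᵇ ℝ} {C : ℝ}

lemma norm_rescaledConv_le (he : ∀ s > 0, |e s| ≤ C / (1 + s)) (F : ℝ →ᵇ ℝ) (t : ℝ) :
    ‖rescaledConv e F t‖ ≤ C * (3 * ∫ u in Set.Ioi 0, dampedRpow (-1 / 2) u) * ‖F‖ := by
  have hC := nonneg_of_abs_le_div_one_add he
  have hM := integral_dampedRpow_nonneg (-1 / 2)
  rcases le_or_gt t 0 with ht | ht
  · rw [rescaledConv_of_nonpos e F ht, norm_zero]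
    positivity
  have hint := intervalIntegrable_endpointMajorant (a := -1 / 2) (by norm_num) (by norm_num) ht.le
  calc ‖rescaledConv e F t‖
      ≤ C * ∫ τ in (0 : ℝ)..t, endpointMajorant (-1 / 2) t τ * ‖F‖ := by
        refine abs_rescaledConv_le he ht (hint.mul_const _) fun τ h0 hlt ↦ ?_
        have : 0 < t - τ := sub_pos.2 hlt
        gcongr
        · exact endpointMajorant_nonneg h0.le hlt.le
        · exact rpow_add_rpow_div_le_endpointMajorant (by norm_num) h0 hlt
        · exact F.norm_coe_le_norm τ
    _ = C * (∫ τ in (0 : ℝ)..t, endpointMajorant (-1 / 2) t τ) * ‖F‖ := by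
        rw [intervalIntegral.integral_mul_const, mul_assoc]
    _ ≤ C * (3 * ∫ u in Set.Ioi 0, dampedRpow (-1 / 2) u) * ‖F‖ := by
        gcongr
        exact integral_endpointMajorant_le (by norm_num) (by norm_num) ht.le

/-- `F ↦ rescaledConv e F` as a bounded operator on bounded continuous functions, for a kernel `e`
decaying like `1 / (1 + s)`. -/
noncomputable def rescaledConvCLM (e : ℝ →ᵇ ℝ) (he : ∀ s > 0, |e s| ≤ C / (1 + s)) :
    (ℝ →ᵇ ℝ) →L[ℝ] (ℝ →ᵇ ℝ) :=
  LinearMap.mkContinuous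
    { toFun F := BoundedContinuousFunction.ofNormedAddCommGroup (rescaledConv e F)
        (continuous_rescaledConv e F) _ (norm_rescaledConv_le he F)
      map_add' F G := by
        ext t
        have hadd := intervalIntegral.integral_add
          (intervalIntegrable_rescaledConv e.continuous F.continuous t)
          (intervalIntegrable_rescaledConv e.continuous G.continuous t)
        simp only [← mul_add] at hadd
        simp only [BoundedContinuousFunction.coe_ofNormedAddCommGroup, rescaledConv,
          BoundedContinuousFunction.coe_add, Pi.add_apply, hadd, mul_add (√t)]
      map_smul' c F := by
        ext t
        simp only [BoundedContinuousFunction.coe_ofNormedAddCommGroup, rescaledConv,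
          BoundedContinuousFunction.coe_smul, smul_eq_mul, RingHom.id_apply,
          ← intervalIntegral.integral_const_mul]
        congr! 2 with θ
        ring }
    (C * (3 * ∫ u in Set.Ioi 0, dampedRpow (-1 / 2) u)) fun F ↦
      BoundedContinuousFunction.norm_ofNormedAddCommGroup_le _
        ((norm_nonneg _).trans (norm_rescaledConv_le he F 0)) (norm_rescaledConv_le he F)

lemma coe_rescaledConvCLM_apply (he : ∀ s > 0, |e s| ≤ C / (1 + s)) (F : ℝ →ᵇ ℝ) :
    ⇑(rescaledConvCLM e he F) = rescaledConv e F :=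
  rfl

end RescaledConvolution

section ExpWeight

/-- A weight `w` with values in `[exp (-L), 1]`, solving `w' = L * exp (-t) * w` on `[0, ∞)`: a
large `L` makes `∫ τ in 0..t, exp (-τ) * w τ` small relative to `w t`. -/
noncomputable def expWeight (L t : ℝ) : ℝ := Real.exp (-L * Real.exp (-|t|))

variable {L t τ : ℝ}

lemma expWeight_pos (L t : ℝ) : 0 < expWeight L t := Real.exp_pos _

lemma expWeight_le_one (hL : 0 ≤ L) (t : ℝ) : expWeight L t ≤ 1 :=
  Real.exp_le_one_iff.2 (mul_nonpos_of_nonpos_of_nonneg (neg_nonpos.2 hL) (Real.exp_pos _).le)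

lemma exp_neg_le_expWeight (hL : 0 ≤ L) (t : ℝ) : Real.exp (-L) ≤ expWeight L t := by
  have hexp : Real.exp (-|t|) ≤ 1 := Real.exp_le_one_iff.2 (neg_nonpos.2 (abs_nonneg t))
  exact Real.exp_le_exp.2 (by nlinarith)

lemma expWeight_le_expWeight (hL : 0 ≤ L) (hτ : 0 ≤ τ) (hτt : τ ≤ t) :
    expWeight L τ ≤ expWeight L t := by
  have hexp : Real.exp (-|t|) ≤ Real.exp (-|τ|) := by
    rw [abs_of_nonneg hτ, abs_of_nonneg (hτ.trans hτt)]
    gcongr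
  exact Real.exp_le_exp.2 (by nlinarith)

lemma continuous_expWeight (L : ℝ) : Continuous (expWeight L) := by
  unfold expWeight
  fun_prop

lemma intervalIntegrable_exp_neg_mul_expWeight (L a b : ℝ) :
    IntervalIntegrable (fun τ ↦ Real.exp (-τ) * expWeight L τ) volume a b :=
  ((by fun_prop : Continuous fun τ : ℝ ↦ Real.exp (-τ)).mul
    (continuous_expWeight L)).intervalIntegrable a b

lemma integral_exp_neg_mul_expWeight_le (hL : 0 < L) (ht : 0 ≤ t) :
    ∫ τ in (0 : ℝ)..t, Real.exp (-τ) * expWeight L τ ≤ expWeight L t / L := by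
  have hderiv (τ : ℝ) : HasDerivAt (fun u ↦ Real.exp (-L * Real.exp (-u)) / L)
      (Real.exp (-τ) * Real.exp (-L * Real.exp (-τ))) τ := by
    refine ((((hasDerivAt_neg τ).exp).const_mul (-L)).exp.div_const L).congr_deriv ?_
    field_simp
  calc ∫ τ in (0 : ℝ)..t, Real.exp (-τ) * expWeight L τ
      = ∫ τ in (0 : ℝ)..t, Real.exp (-τ) * Real.exp (-L * Real.exp (-τ)) := by
        refine intervalIntegral.integral_congr fun τ hτ ↦ ?_
        rw [Set.uIcc_of_le ht] at hτ
        simp only [expWeight, abs_of_nonneg hτ.1]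
    _ = Real.exp (-L * Real.exp (-t)) / L - Real.exp (-L * Real.exp (-0)) / L :=
        intervalIntegral.integral_eq_sub_of_hasDerivAt (fun τ _ ↦ hderiv τ)
          (Continuous.intervalIntegrable (by fun_prop) _ _)
    _ ≤ expWeight L t / L := by
        rw [expWeight, abs_of_nonneg ht]
        exact sub_le_self _ (by positivity)

end ExpWeight

section WeightedEstimate

open scoped BoundedContinuousFunction

variable {t C δ B L D : ℝ} {e F : ℝ → ℝ}

lemma rpow_neg_half_add_div_mul_abs_le_mul_expWeight (hδ : 0 < δ) (hB : 0 ≤ B) (hL : 0 ≤ L)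
    (hD : 0 ≤ D) {τ : ℝ} (hτ : 0 < τ) (hτt : τ < t)
    (hF : |F τ| ≤ (δ + B * Real.exp (-τ)) * (D * expWeight L τ)) :
    (τ ^ (-(1 : ℝ) / 2) + (t - τ) ^ (-(1 : ℝ) / 2)) / (1 + (t - τ)) * |F τ| ≤
      D * expWeight L t * (δ * (endpointMajorant (-1 / 2) t τ + endpointMajorant (-3 / 4) t τ)) +
        D * (2 * B ^ 3 / δ ^ 2) * (Real.exp (-τ) * expWeight L τ) := by
  have : 0 < t - τ := sub_pos.2 hτt
  have hwt := expWeight_pos L t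
  have hwτ := expWeight_pos L τ
  obtain ⟨r, hr0, hr1, hr⟩ : ∃ r, 0 ≤ r ∧ r ≤ 1 ∧ expWeight L τ = expWeight L t * r :=
    ⟨expWeight L τ / expWeight L t, by positivity,
      (div_le_one hwt).2 (expWeight_le_expWeight hL hτ.le hτt.le), by field_simp⟩
  have hq : (B * (Real.exp (-τ) * r)) ^ 3 ≤ B ^ 3 * (Real.exp (-τ) * r) := by
    rw [mul_pow]
    gcongr
    exact pow_le_of_le_one (by positivity)
      (mul_le_one₀ (Real.exp_le_one_iff.2 (by linarith)) hr0 hr1) three_ne_zero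
  set k := (τ ^ (-(1 : ℝ) / 2) + (t - τ) ^ (-(1 : ℝ) / 2)) / (1 + (t - τ))
  calc k * |F τ|
      ≤ k * ((δ + B * Real.exp (-τ)) * (D * expWeight L τ)) := by gcongr
    _ = D * expWeight L t * (k * (δ * r + B * (Real.exp (-τ) * r))) := by rw [hr]; ring
    _ ≤ D * expWeight L t * (k * (δ + B * (Real.exp (-τ) * r))) := by
        gcongr
        exact mul_le_of_le_one_right hδ.le hr1
    _ ≤ D * expWeight L t * (δ * (endpointMajorant (-1 / 2) t τ + endpointMajorant (-3 / 4) t τ) +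
          2 * ((B * (Real.exp (-τ) * r)) ^ 3 / δ ^ 2)) := by
        gcongr
        exact rpow_neg_half_add_div_mul_le hδ (by positivity) hτ hτt
    _ ≤ D * expWeight L t * (δ * (endpointMajorant (-1 / 2) t τ + endpointMajorant (-3 / 4) t τ) +
          2 * (B ^ 3 * (Real.exp (-τ) * r) / δ ^ 2)) := by gcongr
    _ = _ := by rw [hr]; ring

lemma abs_rescaledConv_le_mul_expWeight (he : ∀ s > 0, |e s| ≤ C / (1 + s)) (hδ : 0 < δ)
    (hB : 0 ≤ B) (hL : 0 < L) (hD : 0 ≤ D)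
    (hF : ∀ τ > 0, |F τ| ≤ (δ + B * Real.exp (-τ)) * (D * expWeight L τ)) (ht : 0 < t) :
    |rescaledConv e F t| ≤
      C * (δ * (3 * (∫ u in Set.Ioi 0, dampedRpow (-1 / 2) u) +
        3 * ∫ u in Set.Ioi 0, dampedRpow (-3 / 4) u) + 2 * B ^ 3 / δ ^ 2 / L) *
          (D * expWeight L t) := by
  have hC := nonneg_of_abs_le_div_one_add he
  have hwt := expWeight_pos L t
  have hint₁ := intervalIntegrable_endpointMajorant (a := -1 / 2) (by norm_num) (by norm_num) ht.le
  have hint₂ := intervalIntegrable_endpointMajorant (a := -3 / 4) (by norm_num) (by norm_num) ht.le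
  have hint := ((hint₁.add hint₂).const_mul δ).const_mul (D * expWeight L t)
  have hintw := (intervalIntegrable_exp_neg_mul_expWeight L 0 t).const_mul
    (D * (2 * B ^ 3 / δ ^ 2))
  calc |rescaledConv e F t|
      ≤ C * ∫ τ in (0 : ℝ)..t, (D * expWeight L t *
          (δ * (endpointMajorant (-1 / 2) t τ + endpointMajorant (-3 / 4) t τ)) +
            D * (2 * B ^ 3 / δ ^ 2) * (Real.exp (-τ) * expWeight L τ)) :=
        abs_rescaledConv_le he ht (hint.add hintw) fun τ hτ hτt ↦
          rpow_neg_half_add_div_mul_abs_le_mul_expWeight hδ hB hL.le hD hτ hτt (hF τ hτ)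
    _ = C * (D * expWeight L t * (δ * ((∫ τ in (0 : ℝ)..t, endpointMajorant (-1 / 2) t τ) +
          ∫ τ in (0 : ℝ)..t, endpointMajorant (-3 / 4) t τ)) +
            D * (2 * B ^ 3 / δ ^ 2) * ∫ τ in (0 : ℝ)..t, Real.exp (-τ) * expWeight L τ) := by
        rw [intervalIntegral.integral_add hint hintw]
        simp only [intervalIntegral.integral_const_mul]
        rw [intervalIntegral.integral_add hint₁ hint₂]
    _ ≤ C * (D * expWeight L t * (δ * (3 * (∫ u in Set.Ioi 0, dampedRpow (-1 / 2) u) +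
          3 * ∫ u in Set.Ioi 0, dampedRpow (-3 / 4) u)) +
            D * (2 * B ^ 3 / δ ^ 2) * (expWeight L t / L)) := by
        gcongr
        · exact integral_endpointMajorant_le (by norm_num) (by norm_num) ht.le
        · exact integral_endpointMajorant_le (by norm_num) (by norm_num) ht.le
        · exact integral_exp_neg_mul_expWeight_le hL ht.le
    _ = _ := by ring

lemma exists_abs_le_add_mul_exp_neg {Q : ℝ →ᵇ ℝ} (hQ : Tendsto Q atTop (𝓝 0)) (hδ : 0 < δ) :
    ∃ B ≥ 0, ∀ τ, |Q τ| ≤ δ + B * Real.exp (-τ) := by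
  obtain ⟨T, hT⟩ : ∃ T, ∀ τ ≥ T, |Q τ| ≤ δ := by
    have hsmall := hQ.abs.eventually_le_const (by simpa using hδ)
    exact eventually_atTop.1 hsmall
  refine ⟨‖Q‖ * Real.exp T, by positivity, fun τ ↦ ?_⟩
  rcases le_total T τ with h | h
  · exact (hT τ h).trans (le_add_of_nonneg_right (by positivity))
  · calc |Q τ| ≤ ‖Q‖ * 1 := by rw [mul_one]; exact Q.norm_coe_le_norm τ
      _ ≤ ‖Q‖ * Real.exp (T - τ) := by
          gcongr
          exact Real.one_le_exp (sub_nonneg.2 h)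
      _ ≤ δ + ‖Q‖ * Real.exp T * Real.exp (-τ) := by
          rw [mul_assoc, ← Real.exp_add, ← sub_eq_add_neg]
          exact le_add_of_nonneg_left hδ.le

lemma exists_abs_rescaledConv_mul_le_half_expWeight (he : ∀ s > 0, |e s| ≤ C / (1 + s))
    {Q : ℝ →ᵇ ℝ} (hQ : Tendsto Q atTop (𝓝 0)) :
    ∃ L > 0, ∀ f : ℝ → ℝ, ∀ D ≥ 0, (∀ t, |f t| ≤ D * expWeight L t) →
      ∀ t, |rescaledConv e (fun τ ↦ Q τ * f τ) t| ≤ 1 / 2 * (D * expWeight L t) := by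
  obtain ⟨δ, hδ, hδC⟩ := exists_pos_mul_lt (one_div_pos.2 four_pos)
    (C * (3 * (∫ u in Set.Ioi 0, dampedRpow (-1 / 2) u) +
      3 * ∫ u in Set.Ioi 0, dampedRpow (-3 / 4) u))
  obtain ⟨B, hB, hQB⟩ := exists_abs_le_add_mul_exp_neg hQ hδ
  obtain ⟨L, hL, hLB⟩ := exists_pos_lt_mul (one_div_pos.2 four_pos) (C * (2 * B ^ 3 / δ ^ 2))
  refine ⟨L, hL, fun f D hD hf t ↦ ?_⟩
  have hw := expWeight_pos L t
  rcases le_or_gt t 0 with ht | ht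
  · rw [rescaledConv_of_nonpos e _ ht, abs_zero]
    positivity
  refine (abs_rescaledConv_le_mul_expWeight he hδ hB hL hD (fun τ _ ↦ ?_) ht).trans ?_
  · rw [abs_mul]
    exact mul_le_mul (hQB τ) (hf τ) (abs_nonneg _) (by positivity)
  · gcongr
    have hlast : C * (2 * B ^ 3 / δ ^ 2) / L ≤ 1 / 4 := (div_le_iff₀ hL).2 (by linarith)
    rw [mul_add, ← mul_div_assoc]
    linarith

end WeightedEstimate

section WeightedNeumann

open scoped BoundedContinuousFunction

lemma isUnit_one_sub_of_norm_pow_lt_one {R : Type*} [NormedRing R] [HasSummableGeomSeries R]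
    {a : R} {n : ℕ} (ha : ‖a ^ n‖ < 1) : IsUnit (1 - a) := by
  have hunit : IsUnit (1 - a ^ n) := isUnit_one_sub_of_norm_lt_one ha
  rw [← mul_neg_geom_sum a n] at hunit
  have hcomm : Commute (1 - a) (∑ i ∈ Finset.range n, a ^ i) :=
    (Commute.one_left _).sub_left (Commute.sum_right _ _ _ fun i _ ↦ Commute.self_pow a i)
  exact (hcomm.isUnit_mul_iff.1 hunit).1

variable {X E : Type*} [TopologicalSpace X] [NormedAddCommGroup E] [NormedSpace ℝ E]
  {A : (X →ᵇ E) →L[ℝ] (X →ᵇ E)} {w : X → ℝ} {θ : ℝ}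

lemma norm_pow_apply_le_of_weighted_contraction (hθ : 0 ≤ θ)
    (hA : ∀ f : X →ᵇ E, ∀ D ≥ 0, (∀ x, ‖f x‖ ≤ D * w x) → ∀ x, ‖A f x‖ ≤ θ * (D * w x))
    {f : X →ᵇ E} {D : ℝ} (hD : 0 ≤ D) (hf : ∀ x, ‖f x‖ ≤ D * w x) (n : ℕ) (x : X) :
    ‖(A ^ n) f x‖ ≤ θ ^ n * (D * w x) := by
  induction n generalizing x with
  | zero => simpa using hf x
  | succ n ih =>
    rw [pow_succ' A, pow_succ' θ, mul_assoc]
    simp only [← mul_assoc (θ ^ n)] at ih ⊢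
    exact hA _ _ (by positivity) ih x

/- A contraction for the weighted norm `sup |f| / w` need not be one for the sup norm, but the two
norms are equivalent, so some power of it is. -/
lemma isUnit_one_sub_of_weighted_contraction [CompleteSpace E] {m : ℝ} (hθ : 0 ≤ θ) (hθ1 : θ < 1)
    (hm : 0 < m) (hmw : ∀ x, m ≤ w x) (hw1 : ∀ x, w x ≤ 1)
    (hA : ∀ f : X →ᵇ E, ∀ D ≥ 0, (∀ x, ‖f x‖ ≤ D * w x) → ∀ x, ‖A f x‖ ≤ θ * (D * w x)) :
    IsUnit (1 - A) := by
  have hnorm (n : ℕ) : ‖A ^ n‖ ≤ θ ^ n / m := by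
    refine ContinuousLinearMap.opNorm_le_bound _ (by positivity) fun f ↦
      (BoundedContinuousFunction.norm_le (by positivity)).2 fun x ↦ ?_
    have hf (x : X) : ‖f x‖ ≤ ‖f‖ / m * w x := by
      refine (f.norm_coe_le_norm x).trans ?_
      rw [div_mul_eq_mul_div, le_div_iff₀ hm]
      gcongr
      exact hmw x
    calc ‖(A ^ n) f x‖ ≤ θ ^ n * (‖f‖ / m * w x) :=
          norm_pow_apply_le_of_weighted_contraction hθ hA (by positivity) hf n x
      _ ≤ θ ^ n * (‖f‖ / m * 1) := by gcongr; exact hw1 x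
      _ = θ ^ n / m * ‖f‖ := by ring
  have hlim : Tendsto (fun n ↦ θ ^ n / m) atTop (𝓝 0) := by
    simpa using (tendsto_pow_atTop_nhds_zero_of_lt_one hθ hθ1).div_const m
  obtain ⟨n, hn⟩ := (hlim.eventually_lt_const one_pos).exists
  exact isUnit_one_sub_of_norm_pow_lt_one ((hnorm n).trans_lt hn)

end WeightedNeumann

section FixedPoint

open scoped BoundedContinuousFunction

variable {e Q : ℝ →ᵇ ℝ} {C : ℝ}

lemma isUnit_one_sub_rescaledConvCLM_comp_mul (he : ∀ s > 0, |e s| ≤ C / (1 + s))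
    (hQ : Tendsto Q atTop (𝓝 0)) :
    IsUnit (1 - rescaledConvCLM e he ∘L ContinuousLinearMap.mul ℝ (ℝ →ᵇ ℝ) Q) := by
  obtain ⟨L, hL, hhalf⟩ := exists_abs_rescaledConv_mul_le_half_expWeight he hQ
  exact isUnit_one_sub_of_weighted_contraction (by norm_num) one_half_lt_one (Real.exp_pos (-L))
    (exp_neg_le_expWeight hL.le) (expWeight_le_one hL.le) fun f D hD hf ↦ hhalf f D hD hf

lemma existsUnique_eq_add_rescaledConvCLM (he : ∀ s > 0, |e s| ≤ C / (1 + s))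
    (hQ : Tendsto Q atTop (𝓝 0)) (f h : ℝ →ᵇ ℝ) :
    ∃! y : ℝ →ᵇ ℝ, y = f + rescaledConvCLM e he (Q * y + h) := by
  have hbij := (ContinuousLinearMap.isUnit_iff_bijective).1
    (isUnit_one_sub_rescaledConvCLM_comp_mul he hQ)
  refine (existsUnique_congr fun y ↦ ?_).1 (hbij.existsUnique (f + rescaledConvCLM e he h))
  simp only [sub_apply, one_apply_eq_self,
    ContinuousLinearMap.comp_apply, ContinuousLinearMap.mul_apply', map_add, sub_eq_iff_eq_add]
  rw [add_assoc, add_comm (rescaledConvCLM e he h)]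

lemma eqOn_Ioi_of_eq_add_rescaledConvCLM (he : ∀ s > 0, |e s| ≤ C / (1 + s))
    (hQ : Tendsto Q atTop (𝓝 0)) {f h y z : ℝ →ᵇ ℝ}
    (hy : y = f + rescaledConvCLM e he (Q * y + h))
    (hz : Set.EqOn z ⇑(f + rescaledConvCLM e he (Q * z + h)) (Set.Ioi 0)) :
    Set.EqOn z y (Set.Ioi 0) := by
  set z' := f + rescaledConvCLM e he (Q * z + h) with hz'
  have hconv : rescaledConvCLM e he (Q * z + h) = rescaledConvCLM e he (Q * z' + h) := by
    refine DFunLike.coe_injective ?_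
    rw [coe_rescaledConvCLM_apply, coe_rescaledConvCLM_apply]
    refine rescaledConv_congr e fun t ht ↦ ?_
    simp only [BoundedContinuousFunction.coe_add, BoundedContinuousFunction.coe_mul, Pi.add_apply,
      Pi.mul_apply, hz ht]
  have hz'y : z' = y :=
    (existsUnique_eq_add_rescaledConvCLM he hQ f h).unique (hz'.trans (by rw [hconv])) hy
  rwa [hz'y] at hz

end FixedPoint

section WeightedContinuity

open scoped BoundedContinuousFunction

variable {x : ℝ → ℝ}

lemma exists_boundedContinuousFunction_eqOn_Ici {f : ℝ → ℝ} (hf : ContinuousOn f (Set.Ici 0))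
    {C : ℝ} (hC : ∀ t ≥ 0, ‖f t‖ ≤ C) : ∃ y : ℝ →ᵇ ℝ, Set.EqOn y f (Set.Ici 0) := by
  have hcont : Continuous fun t ↦ f (max t 0) :=
    hf.comp_continuous (by fun_prop) fun t ↦ le_max_right t 0
  refine ⟨.ofNormedAddCommGroup _ hcont C fun t ↦ hC _ (le_max_right t 0), fun t ht ↦ ?_⟩
  simp only [BoundedContinuousFunction.coe_ofNormedAddCommGroup, max_eq_left (Set.mem_Ici.1 ht)]

lemma exists_norm_le_of_continuousOn_Ici_of_tendsto {f : ℝ → ℝ} {l : ℝ}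
    (hf : ContinuousOn f (Set.Ici 0)) (hlim : Tendsto f atTop (𝓝 l)) :
    ∃ C, ∀ t ≥ 0, ‖f t‖ ≤ C := by
  obtain ⟨T, hT⟩ := eventually_atTop.1 (hlim.norm.eventually_le_const (lt_add_one ‖l‖))
  obtain ⟨K, hK⟩ :=
    (isCompact_Icc (a := (0 : ℝ)) (b := T)).exists_bound_of_continuousOn
      (hf.mono Set.Icc_subset_Ici_self)
  refine ⟨max K (‖l‖ + 1), fun t ht ↦ ?_⟩
  rcases le_total t T with h | h
  · exact (hK t ⟨ht, h⟩).trans (le_max_left _ _)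
  · exact (hT t h).trans (le_max_right _ _)

lemma memC0half.exists_boundedContinuousFunction (hx : memC0half x) :
    ∃ y : ℝ →ᵇ ℝ, ∀ t > 0, y t = √t * x t := by
  obtain ⟨hcont, ⟨l, hl⟩, C, hC⟩ := hx
  simp only [← Real.sqrt_eq_rpow] at hl hC
  set f : ℝ → ℝ := Function.update (fun t ↦ √t * x t) 0 l with hf
  have hf_pos (t : ℝ) (ht : 0 < t) : f t = √t * x t := Function.update_of_ne ht.ne' _ _
  have hf_cont : ContinuousOn f (Set.Ici 0) := by
    rw [hf, continuousOn_update_iff, Set.Ici_sdiff_left]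
    exact ⟨Real.continuous_sqrt.continuousOn.mul hcont, fun _ ↦ hl⟩
  have hf_bound (t : ℝ) (ht : 0 ≤ t) : ‖f t‖ ≤ max C |l| := by
    rcases ht.eq_or_lt with rfl | ht
    · simp [hf]
    · rw [hf_pos t ht, Real.norm_eq_abs, abs_mul, abs_of_nonneg (Real.sqrt_nonneg t)]
      exact (hC t ht.le).trans (le_max_left _ _)
  obtain ⟨y, hy⟩ := exists_boundedContinuousFunction_eqOn_Ici hf_cont hf_bound
  exact ⟨y, fun t ht ↦ (hy ht.le).trans (hf_pos t ht)⟩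

lemma memC0half_of_boundedContinuousFunction (y : ℝ →ᵇ ℝ) (hy : ∀ t > 0, y t = √t * x t) :
    memC0half x := by
  refine ⟨?_, ⟨y 0, ?_⟩, ‖y‖, fun t ht ↦ ?_⟩
  · have hquot : ContinuousOn (fun t ↦ y t / √t) (Set.Ioi 0) :=
      y.continuous.continuousOn.div Real.continuous_sqrt.continuousOn
        fun t ht ↦ (Real.sqrt_pos.2 ht).ne'
    refine hquot.congr fun t ht ↦ ?_
    simp only [hy t ht, mul_div_cancel_left₀ _ (Real.sqrt_pos.2 ht).ne']
  · refine Tendsto.congr' ?_ (y.continuous.continuousAt.tendsto.mono_left nhdsWithin_le_nhds)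
    filter_upwards [self_mem_nhdsWithin] with t ht
    rw [hy t ht, Real.sqrt_eq_rpow]
  · rw [← Real.sqrt_eq_rpow]
    rcases ht.eq_or_lt with rfl | ht
    · simp
    · rw [← abs_of_nonneg (Real.sqrt_nonneg t), ← abs_mul, ← hy t ht]
      exact y.norm_coe_le_norm t

lemma memC0half.tendsto_atTop_zero (hx : memC0half x) : Tendsto x atTop (𝓝 0) := by
  obtain ⟨-, -, C, hC⟩ := hx
  have hlim : Tendsto (fun t : ℝ ↦ C / t ^ ((1 : ℝ) / 2)) atTop (𝓝 0) :=
    (tendsto_rpow_atTop (by norm_num)).const_div_atTop C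
  refine squeeze_zero_norm' ?_ hlim
  filter_upwards [eventually_gt_atTop 0] with t ht
  exact (le_div_iff₀' (by positivity)).2 (hC t ht.le)

end WeightedContinuity

section MildSolution

open scoped BoundedContinuousFunction

/-- Variation-of-constants form of `D^{1/2} x = -x + Q x + g` with `lim_{t → 0⁺} √t * x t = x₀`. -/
def IsMildSolution (Q g : ℝ → ℝ) (x₀ : ℝ) (x : ℝ → ℝ) : Prop :=
  ∀ t > (0 : ℝ),
    x t = t ^ (-(1 : ℝ) / 2) * mlScalar (1 / 2) (1 / 2) (-t ^ ((1 : ℝ) / 2)) * x₀ +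
      ∫ τ in (0 : ℝ)..t, (t - τ) ^ (-(1 : ℝ) / 2) *
        mlScalar (1 / 2) (1 / 2) (-(t - τ) ^ ((1 : ℝ) / 2)) * (Q τ * x τ + g τ)

/-- `t ↦ E_{1/2,1/2}(-√t)` as a bounded continuous function, constant on `(-∞, 0]` because
`Real.sqrt` vanishes there. -/
noncomputable def mlHalfKernel : ℝ →ᵇ ℝ :=
  .ofNormedAddCommGroup (fun t ↦ mlScalar (1 / 2) (1 / 2) (-√t))
    continuous_mlScalar_half_half_neg_sqrt 1 fun t ↦ by
      have hmax : √t = √(max t 0) := by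
        rcases le_total t 0 with ht | ht
        · rw [max_eq_right ht, Real.sqrt_zero, Real.sqrt_eq_zero_of_nonpos ht]
        · rw [max_eq_left ht]
      rw [hmax]
      refine (abs_mlScalar_half_half_neg_sqrt_le (le_max_right t 0)).trans ?_
      exact div_le_one_of_le₀ (by linarith [le_max_right t 0]) (by linarith [le_max_right t 0])

lemma mlHalfKernel_apply (t : ℝ) : mlHalfKernel t = mlScalar (1 / 2) (1 / 2) (-√t) := rfl

lemma abs_mlHalfKernel_le (s : ℝ) (hs : s > 0) : |mlHalfKernel s| ≤ 1 / (1 + s) :=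
  abs_mlScalar_half_half_neg_sqrt_le hs.le

variable {Q g x : ℝ → ℝ} {Q' h y : ℝ →ᵇ ℝ} {x₀ : ℝ}

lemma isMildSolution_iff_rescaledConv (hQ : Set.EqOn Q' Q (Set.Ici 0))
    (hh : ∀ t > 0, h t = √t * g t) (hy : ∀ t > 0, y t = √t * x t) :
    IsMildSolution Q g x₀ x ↔
      ∀ t > 0, y t = x₀ * mlHalfKernel t + rescaledConv mlHalfKernel ⇑(Q' * y + h) t := by
  refine forall₂_congr fun t ht ↦ ?_
  have hintegral : ∫ τ in (0 : ℝ)..t, (t - τ) ^ (-(1 : ℝ) / 2) *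
        mlScalar (1 / 2) (1 / 2) (-(t - τ) ^ ((1 : ℝ) / 2)) * (Q τ * x τ + g τ) =
      ∫ τ in (0 : ℝ)..t, (t - τ) ^ (-(1 : ℝ) / 2) * mlHalfKernel (t - τ) *
        (τ ^ (-(1 : ℝ) / 2) * (Q' * y + h) τ) := by
    refine intervalIntegral.integral_congr_ae (Eventually.of_forall fun τ hτ ↦ ?_)
    rw [Set.uIoc_of_le ht.le] at hτ
    simp only [mlHalfKernel_apply, Real.sqrt_eq_rpow (t - τ), BoundedContinuousFunction.coe_add,
      BoundedContinuousFunction.coe_mul, Pi.add_apply, Pi.mul_apply, hQ hτ.1.le, hy τ hτ.1,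
      hh τ hτ.1]
    linear_combination -((t - τ) ^ (-(1 : ℝ) / 2) *
      mlScalar (1 / 2) (1 / 2) (-(t - τ) ^ ((1 : ℝ) / 2)) * (Q τ * x τ + g τ)) *
        sqrt_mul_rpow_neg_half hτ.1
  have hsqrt := sqrt_mul_rpow_neg_half ht
  rw [hintegral, rescaledConv_eq_integral _ _ ht, hy t ht, ← Real.sqrt_eq_rpow,
    ← mlHalfKernel_apply, ← mul_right_inj' (Real.sqrt_pos.2 ht).ne', mul_add]
  simp only [← mul_assoc, hsqrt, one_mul, mul_comm x₀]

theorem stmt16_general (hQ : ContinuousOn Q (Set.Ici 0)) (hQ0 : Tendsto Q atTop (𝓝 0))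
    (hg : memC0half g) (x₀ : ℝ) :
    ∃ φ : ℝ → ℝ, memC0half φ ∧ IsMildSolution Q g x₀ φ ∧
      (∀ ψ : ℝ → ℝ, memC0half ψ → IsMildSolution Q g x₀ ψ → ∀ t > 0, ψ t = φ t) ∧
      Tendsto φ atTop (𝓝 0) := by
  obtain ⟨C, hC⟩ := exists_norm_le_of_continuousOn_Ici_of_tendsto hQ hQ0
  obtain ⟨Q', hQQ'⟩ := exists_boundedContinuousFunction_eqOn_Ici hQ hC
  obtain ⟨h, hh⟩ := hg.exists_boundedContinuousFunction
  have hQ'0 : Tendsto Q' atTop (𝓝 0) :=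
    hQ0.congr' (by filter_upwards [eventually_ge_atTop 0] with t ht using (hQQ' ht).symm)
  obtain ⟨y, hy, -⟩ := existsUnique_eq_add_rescaledConvCLM abs_mlHalfKernel_le hQ'0
    (x₀ • mlHalfKernel) h
  have hφy (t : ℝ) (ht : t > 0) : y t = √t * (y t / √t) :=
    (mul_div_cancel₀ _ (Real.sqrt_pos.2 ht).ne').symm
  have hφ : memC0half fun t ↦ y t / √t := memC0half_of_boundedContinuousFunction y hφy
  refine ⟨fun t ↦ y t / √t, hφ, ?_, fun ψ hψ hψ_sol t ht ↦ ?_, hφ.tendsto_atTop_zero⟩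
  · exact (isMildSolution_iff_rescaledConv hQQ' hh hφy).2 fun t _ ↦ DFunLike.congr_fun hy t
  · obtain ⟨z, hz⟩ := hψ.exists_boundedContinuousFunction
    have hzy : z t = y t := eqOn_Ioi_of_eq_add_rescaledConvCLM abs_mlHalfKernel_le hQ'0 hy
      ((isMildSolution_iff_rescaledConv hQQ' hh hz).1 hψ_sol) ht
    simp only [← hzy, hz t ht, mul_div_cancel_left₀ _ (Real.sqrt_pos.2 ht).ne']

end MildSolution

section Example

lemma Qex_eq_div_max (t : ℝ) : Qex t = 1000 ^ 2 / max t 1000 := by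
  unfold Qex
  split_ifs with ht
  · rw [max_eq_right ht]
    norm_num
  · rw [max_eq_left (not_le.1 ht).le]

lemma continuous_Qex : Continuous Qex := by
  rw [funext Qex_eq_div_max]
  exact continuous_const.div (by fun_prop) fun t ↦ (lt_max_of_lt_right (by norm_num)).ne'

lemma tendsto_Qex_atTop : Tendsto Qex atTop (𝓝 0) := by
  rw [funext Qex_eq_div_max]
  exact (tendsto_atTop_mono (fun t ↦ le_max_left t 1000) tendsto_id).const_div_atTop _

lemma memC0half_one_div_one_add_rpow : memC0half fun t ↦ 1 / (1 + t ^ ((1 : ℝ) / 2)) := by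
  have hpos (t : ℝ) : 0 < 1 + √t := by positivity
  refine memC0half_of_boundedContinuousFunction
    (.ofNormedAddCommGroup (fun t ↦ √t / (1 + √t))
      (Real.continuous_sqrt.div (by fun_prop) fun t ↦ (hpos t).ne') 1 fun t ↦ ?_) fun t _ ↦ ?_
  · rw [Real.norm_of_nonneg (by positivity)]
    exact div_le_one_of_le₀ (by linarith) (hpos t).le
  · rw [← Real.sqrt_eq_rpow, mul_one_div]
    rfl

end Example

theorem stmt16 :
    ∀ x₀ : ℝ, ∃ φ : ℝ → ℝ,
      memC0half φ ∧
      (∀ t > (0:ℝ),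
        φ t = t ^ (-(1:ℝ)/2) * mlScalar (1/2) (1/2) (-t ^ ((1:ℝ)/2)) * x₀
          + ∫ τ in (0:ℝ)..t, (t - τ) ^ (-(1:ℝ)/2) * mlScalar (1/2) (1/2) (-(t - τ) ^ ((1:ℝ)/2))
              * (Qex τ * φ τ + 1 / (1 + τ ^ ((1:ℝ)/2)))) ∧
      (∀ ψ : ℝ → ℝ, memC0half ψ →
        (∀ t > (0:ℝ),
          ψ t = t ^ (-(1:ℝ)/2) * mlScalar (1/2) (1/2) (-t ^ ((1:ℝ)/2)) * x₀
            + ∫ τ in (0:ℝ)..t, (t - τ) ^ (-(1:ℝ)/2) * mlScalar (1/2) (1/2) (-(t - τ) ^ ((1:ℝ)/2))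
                * (Qex τ * ψ τ + 1 / (1 + τ ^ ((1:ℝ)/2)))) →
        ∀ t > (0:ℝ), ψ t = φ t) ∧
      Tendsto φ atTop (𝓝 0) := by
  exact stmt16_general continuous_Qex.continuousOn tendsto_Qex_atTop memC0half_one_div_one_add_rpow
end

section
/- Let 0 < α < 1, let A be a real s×s matrix all of whose (complex) eigenvalues λ satisfy λ ≠ 0 and |arg λ| > απ/2, let Q : [0,∞) → ℝ^{s×s} be continuous and bounded, let g : [0,∞) → ℝ^s be continuous with sup_{t≥0} t^{1-α} ∫₀^t (t-τ)^{α-1} ‖E_{α,α}((t-τ)^α A) g(τ)‖ dτ < ∞, and fix x₀ ∈ ℝ^s. Then the operator (T_{x₀}ξ)(t) := t^{α-1} E_{α,α}(t^α A) x₀ + ∫₀^t (t-τ)^{α-1} E_{α,α}((t-τ)^α A) Q(τ) ξ(τ) dτ + ∫₀^t (t-τ)^{α-1} E_{α,α}((t-τ)^α A) g(τ) dτ maps C⁰_{1-α}([0,∞), ℝ^s) into itself, i.e. for every ξ ∈ C⁰_{1-α}([0,∞), ℝ^s) the function T_{x₀}ξ is continuous on (0,∞), lim_{t→0⁺} t^{1-α}(T_{x₀}ξ)(t)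 exists, and sup_{t≥0} t^{1-α} ‖(T_{x₀}ξ)(t)‖ < ∞. -/
open Filter Topology MeasureTheory

attribute [local instance] Matrix.linftyOpNormedAddCommGroup Matrix.linftyOpNormedRing

/-- The matrix Mittag-Leffler function `E_{α,β}(B) = ∑ Bᵏ / Γ(αk + β)`. -/
noncomputable def ML {s : ℕ} (α β : ℝ) (B : Matrix (Fin s) (Fin s) ℝ) :
    Matrix (Fin s) (Fin s) ℝ :=
  ∑' k : ℕ, (Real.Gamma (α * k + β))⁻¹ • B ^ k

/-- Membership in `C⁰_{1-α}([0,∞), ℝ^s)`: continuous on `(0,∞)`, the limit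
`lim_{t→0⁺} t^{1-α} x(t)` exists, and `sup_{t≥0} t^{1-α} ‖x(t)‖ < ∞`. -/
def memC0inf (α : ℝ) {s : ℕ} (x : ℝ → (Fin s → ℝ)) : Prop :=
  ContinuousOn x (Set.Ioi 0) ∧
  (∃ l : Fin s → ℝ, Tendsto (fun t : ℝ => t ^ (1 - α) • x t) (𝓝[>] 0) (𝓝 l)) ∧
  (∃ C : ℝ, ∀ t : ℝ, 0 ≤ t → t ^ (1 - α) * ‖x t‖ ≤ C)

/-- The operator `T_{x₀}` of the variation-of-constants equation. -/
noncomputable def Tfull {s : ℕ} (α : ℝ) (A : Matrix (Fin s) (Fin s) ℝ)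
    (Q : ℝ → Matrix (Fin s) (Fin s) ℝ) (g : ℝ → (Fin s → ℝ)) (x₀ : Fin s → ℝ)
    (ξ : ℝ → (Fin s → ℝ)) (t : ℝ) : Fin s → ℝ :=
  t ^ (α - 1) • (ML α α (t ^ α • A)).mulVec x₀
    + (∫ τ in (0:ℝ)..t, (t - τ) ^ (α - 1) •
        (ML α α ((t - τ) ^ α • A) * Q τ).mulVec (ξ τ))
    + ∫ τ in (0:ℝ)..t, (t - τ) ^ (α - 1) •
        (ML α α ((t - τ) ^ α • A)).mulVec (g τ)

/-!
Substituting `ζ = exp w` in Hankel's formula for `1 / Γ` turns the Hankel contour into the boundary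
of a half-strip, and gives `E_{α,β}(b) = (2πi)⁻¹ ∫ exp(ζ) ζ^{α-β} (ζ^α - b)⁻¹ dζ`. When the spectrum
of `b` avoids the sector `|arg λ| ≤ απ/2`, the contour can be opened slightly beyond the imaginary
axis without meeting the spectrum of `r b` for any `r > 0`, and the resolvent identity expands the
integral in powers of `1 / r`. The leading term carries the factor `1 / Γ(β - α)`, which vanishes
for `β = α`; hence `E_{α,α}(r A) = O(r⁻²)`.

The kernel `u^{α-1} E_{α,α}(u^α A)` is therefore `O(u^{α-1})` at `0` and `O(u^{-α-1})` at infinity,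
so it is integrable and `O(u⁻¹)`. Convolving with a function that is `O(τ^{α-1})`, one of `t - τ`
and `τ` is at least `t / 2`, which bounds the integral by a multiple of `t^{α-1}`. Rescaling the
convolution to `[0, 1]`, where the integrand is dominated by a Beta density, gives continuity and
the limit `0` at the origin.
-/

section HankelContour

open Complex (I)
open Set

variable {E : Type*} [NormedAddCommGroup E] [NormedSpace ℂ E]

/-- The integral of `F` over the Hankel contour in the logarithmic coordinate `w = log ζ`: the
contour comes in from `+∞ - iθ`, runs up the segment `re w = R` and goes out to `+∞ + iθ`.  In the
coordinate `ζ = exp w` this is two rays at angles `±θ` joined by an arc of radius `exp R`, and no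
branch of `ζ ^ z` has to be chosen. -/
noncomputable def hankelIntegral (θ R : ℝ) (F : ℂ → E) : E :=
  I • (∫ y in (-θ)..θ, F (R + y * I)) +
    ((∫ x in Ioi R, F (x + θ * I)) - ∫ x in Ioi R, F (x + (-θ : ℝ) * I))

/-- The integrands for which `hankelIntegral θ R` converges and does not depend on `R`:
holomorphic on the closed strip `|im w| ≤ θ`, and `O(exp (-re w))` along its two edges. -/
structure HankelAdmissible (θ : ℝ) (F : ℂ → E) : Prop where
  differentiableAt : ∀ w : ℂ, |w.im| ≤ θ → DifferentiableAt ℂ F w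
  decay : ∀ R : ℝ, ∃ C : ℝ, ∀ w : ℂ, |w.im| = θ → R ≤ w.re → ‖F w‖ ≤ C * Real.exp (-w.re)

lemma continuous_horizontal {F : ℂ → E} {φ : ℝ}
    (hF : ∀ w : ℂ, w.im = φ → DifferentiableAt ℂ F w) :
    Continuous fun x : ℝ => F (x + φ * I) :=
  continuous_iff_continuousAt.2 fun x =>
    (hF (x + φ * I) (by simp)).continuousAt.comp (f := fun x : ℝ => (x : ℂ) + φ * I) (by fun_prop)

lemma intervalIntegrable_vertical {F : ℂ → E} {a b : ℝ}
    (hF : ∀ w : ℂ, w.im ∈ uIcc a b → DifferentiableAt ℂ F w) (R : ℝ) :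
    IntervalIntegrable (fun y : ℝ => F (R + y * I)) volume a b :=
  ContinuousOn.intervalIntegrable fun y hy =>
    ((hF (R + y * I) (by simpa using hy)).continuousAt.comp
      (f := fun y : ℝ => (R : ℂ) + y * I) (by fun_prop)).continuousWithinAt

lemma integrableOn_horizontal {F : ℂ → E} {φ R C : ℝ}
    (hF : ∀ w : ℂ, w.im = φ → DifferentiableAt ℂ F w)
    (hdecay : ∀ w : ℂ, w.im = φ → R ≤ w.re → ‖F w‖ ≤ C * Real.exp (-w.re)) :
    IntegrableOn (fun x : ℝ => F (x + φ * I)) (Ioi R) := by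
  have hexp : IntegrableOn (fun x : ℝ => C * Real.exp (-x)) (Ioi R) := by
    simpa [IntegrableOn] using (integrableOn_exp_mul_Ioi (a := -1) (by norm_num) R).const_mul C
  refine Integrable.mono' hexp (continuous_horizontal hF).aestronglyMeasurable ?_
  filter_upwards [ae_restrict_mem measurableSet_Ioi] with x hx
  simpa using hdecay (x + φ * I) (by simp) (by simpa using (mem_Ioi.1 hx).le)

namespace HankelAdmissible

variable {F G : ℂ → E} {θ : ℝ}

lemma add (hF : HankelAdmissible θ F) (hG : HankelAdmissible θ G) :
    HankelAdmissible θ fun w => F w + G w where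
  differentiableAt w hw := (hF.differentiableAt w hw).add (hG.differentiableAt w hw)
  decay R := by
    obtain ⟨C, hC⟩ := hF.decay R
    obtain ⟨D, hD⟩ := hG.decay R
    refine ⟨C + D, fun w hw hR => (norm_add_le _ _).trans ?_⟩
    rw [add_mul]
    exact add_le_add (hC w hw hR) (hD w hw hR)

lemma smul_const {f : ℂ → ℂ} (hf : HankelAdmissible θ f) (v : E) :
    HankelAdmissible θ fun w => f w • v where
  differentiableAt w hw := (hf.differentiableAt w hw).smul_const v
  decay R := by
    obtain ⟨C, hC⟩ := hf.decay R
    refine ⟨C * ‖v‖, fun w hw hR => ?_⟩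
    rw [norm_smul, mul_right_comm]
    exact mul_le_mul_of_nonneg_right (hC w hw hR) (norm_nonneg v)

lemma smul_of_norm_le {f : ℂ → ℂ} {M : ℝ} (hf : HankelAdmissible θ f)
    (hG : ∀ w : ℂ, |w.im| ≤ θ → DifferentiableAt ℂ G w)
    (hM : ∀ w : ℂ, |w.im| = θ → ‖G w‖ ≤ M) : HankelAdmissible θ fun w => f w • G w where
  differentiableAt w hw := (hf.differentiableAt w hw).smul (hG w hw)
  decay R := by
    obtain ⟨C, hC⟩ := hf.decay R
    refine ⟨C * M, fun w hw hR => ?_⟩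
    rw [norm_smul, mul_right_comm]
    exact mul_le_mul (hC w hw hR) (hM w hw) (norm_nonneg _) ((norm_nonneg _).trans (hC w hw hR))

lemma integrableOn_ray (hF : HankelAdmissible θ F) {φ : ℝ} (hφ : |φ| = θ) (R : ℝ) :
    IntegrableOn (fun x : ℝ => F (x + φ * I)) (Ioi R) := by
  obtain ⟨C, hC⟩ := hF.decay R
  exact integrableOn_horizontal (fun w hw => hF.differentiableAt w (by rw [hw, hφ]))
    fun w hw => hC w (by rw [hw, hφ])

lemma integrableOn_upper (hF : HankelAdmissible θ F) (hθ : 0 ≤ θ) (R : ℝ) :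
    IntegrableOn (fun x : ℝ => F (x + θ * I)) (Ioi R) :=
  hF.integrableOn_ray (abs_of_nonneg hθ) R

lemma integrableOn_lower (hF : HankelAdmissible θ F) (hθ : 0 ≤ θ) (R : ℝ) :
    IntegrableOn (fun x : ℝ => F (x + (-θ : ℝ) * I)) (Ioi R) :=
  hF.integrableOn_ray (by rw [abs_neg, abs_of_nonneg hθ]) R

lemma intervalIntegrable (hF : HankelAdmissible θ F) (hθ : 0 ≤ θ) (R : ℝ) :
    IntervalIntegrable (fun y : ℝ => F (R + y * I)) volume (-θ) θ :=
  intervalIntegrable_vertical (fun w hw => hF.differentiableAt w (by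
    rwa [uIcc_of_le (by linarith), mem_Icc, ← abs_le] at hw)) R

end HankelAdmissible

variable {F G : ℂ → E} {θ : ℝ}

lemma hankelIntegral_add (hθ : 0 ≤ θ) (hF : HankelAdmissible θ F) (hG : HankelAdmissible θ G)
    (R : ℝ) : hankelIntegral θ R (fun w => F w + G w) =
      hankelIntegral θ R F + hankelIntegral θ R G := by
  unfold hankelIntegral
  rw [intervalIntegral.integral_add (hF.intervalIntegrable hθ R) (hG.intervalIntegrable hθ R),
    integral_add (hF.integrableOn_upper hθ R) (hG.integrableOn_upper hθ R),
    integral_add (hF.integrableOn_lower hθ R) (hG.integrableOn_lower hθ R), smul_add]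
  abel

lemma hankelIntegral_smul_const [CompleteSpace E] (θ R : ℝ) (f : ℂ → ℂ) (v : E) :
    hankelIntegral θ R (fun w => f w • v) = hankelIntegral θ R f • v := by
  simp only [hankelIntegral, intervalIntegral.integral_smul_const, integral_smul_const, add_smul,
    sub_smul, smul_eq_mul, mul_smul]

lemma integral_boundary_strip_eq_zero {a b : ℝ} (hab : a ≤ b)
    (hF : ∀ w : ℂ, w.im ∈ Icc a b → DifferentiableAt ℂ F w) (R R' : ℝ) :
    (∫ x in R..R', F (x + a * I)) - (∫ x in R..R', F (x + b * I)) +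
      I • (∫ y in a..b, F (R' + y * I)) - I • ∫ y in a..b, F (R + y * I) = 0 := by
  have hcauchy := Complex.integral_boundary_rect_eq_zero_of_differentiableOn F
    (R + a * I) (R' + b * I) fun w hw => (hF w (by
      simpa [uIcc_of_le hab] using (Complex.mem_reProdIm.1 hw).2)).differentiableWithinAt
  simpa using hcauchy

lemma hankelIntegral_eq_of_le (hθ : 0 ≤ θ) (hF : HankelAdmissible θ F) {R R' : ℝ} (hR : R ≤ R') :
    hankelIntegral θ R F = hankelIntegral θ R' F := by
  have hrect := integral_boundary_strip_eq_zero (a := -θ) (b := θ) (by linarith)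
    (fun w hw => hF.differentiableAt w (abs_le.2 hw)) R R'
  rw [← intervalIntegral.integral_Ioi_sub_Ioi (hF.integrableOn_upper hθ R) hR,
    ← intervalIntegral.integral_Ioi_sub_Ioi (hF.integrableOn_lower hθ R) hR] at hrect
  unfold hankelIntegral
  rw [← sub_eq_zero, ← neg_eq_zero, ← hrect]
  abel

lemma hankelIntegral_eq (hθ : 0 ≤ θ) (hF : HankelAdmissible θ F) (R R' : ℝ) :
    hankelIntegral θ R F = hankelIntegral θ R' F :=
  (le_total R R').elim (hankelIntegral_eq_of_le hθ hF) fun h =>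
    (hankelIntegral_eq_of_le hθ hF h).symm

lemma tendsto_integral_vertical_zero {l : Filter ℝ} {a b : ℝ} {u : ℝ → ℝ}
    (hab : a ≤ b) (hu : Tendsto u l (𝓝 0))
    (hF : ∀ᶠ r in l, ∀ w : ℂ, w.re = r → w.im ∈ Icc a b → ‖F w‖ ≤ u r) :
    Tendsto (fun r : ℝ => I • ∫ y in a..b, F (r + y * I)) l (𝓝 0) := by
  refine squeeze_zero_norm' ?_ (show Tendsto (fun r => u r * |b - a|) l (𝓝 0) by
    simpa using hu.mul_const |b - a|)
  filter_upwards [hF] with r hr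
  rw [norm_smul, Complex.norm_I, one_mul]
  refine intervalIntegral.norm_integral_le_of_norm_le_const fun y hy => ?_
  rw [uIoc_of_le hab] at hy
  exact hr (r + y * I) (by simp) (by simpa using Ioc_subset_Icc_self hy)

lemma integral_Ioi_sub_integral_Ioi_of_halfStrip {a b R C : ℝ} (hab : a ≤ b)
    (hF : ∀ w : ℂ, w.im ∈ Icc a b → DifferentiableAt ℂ F w)
    (hdecay : ∀ w : ℂ, w.im ∈ Icc a b → R ≤ w.re → ‖F w‖ ≤ C * Real.exp (-w.re)) :
    (∫ x in Ioi R, F (x + a * I)) - ∫ x in Ioi R, F (x + b * I) =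
      I • ∫ y in a..b, F (R + y * I) := by
  have hray {φ : ℝ} (hφ : φ ∈ Icc a b) : Tendsto (fun r => ∫ x in R..r, F (x + φ * I)) atTop
      (𝓝 (∫ x in Ioi R, F (x + φ * I))) :=
    intervalIntegral_tendsto_integral_Ioi R
      (integrableOn_horizontal (fun w hw => hF w (hw ▸ hφ)) fun w hw => hdecay w (hw ▸ hφ))
      tendsto_id
  have hseg : Tendsto (fun r : ℝ => I • ∫ y in a..b, F (r + y * I)) atTop (𝓝 0) := by
    refine tendsto_integral_vertical_zero (u := fun r => C * Real.exp (-r)) hab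
      (by simpa using Real.tendsto_exp_neg_atTop_nhds_zero.const_mul C) ?_
    filter_upwards [eventually_ge_atTop R] with r hr w hw him
    simpa only [hw] using hdecay w him (hw ▸ hr)
  have hlim := (((hray (left_mem_Icc.2 hab)).sub (hray (right_mem_Icc.2 hab))).add hseg).sub_const
    (I • ∫ y in a..b, F (R + y * I))
  rw [add_zero] at hlim
  refine sub_eq_zero.1 (tendsto_nhds_unique hlim (tendsto_const_nhds.congr fun r => ?_))
  exact (integral_boundary_strip_eq_zero hab hF R r).symm

lemma hankelIntegral_eq_of_angle_le {θ' R C : ℝ} (hθ : 0 ≤ θ) (hθ' : θ ≤ θ')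
    (hF : ∀ w : ℂ, |w.im| ≤ θ' → DifferentiableAt ℂ F w)
    (hdecay : ∀ w : ℂ, θ ≤ |w.im| → |w.im| ≤ θ' → R ≤ w.re → ‖F w‖ ≤ C * Real.exp (-w.re)) :
    hankelIntegral θ R F = hankelIntegral θ' R F := by
  have hupper := integral_Ioi_sub_integral_Ioi_of_halfStrip (F := F) (R := R) (C := C) hθ'
    (fun w hw => hF w (abs_le.2 ⟨by linarith [hw.1], hw.2⟩))
    (fun w hw => hdecay w (hw.1.trans (le_abs_self _)) (abs_le.2 ⟨by linarith [hw.1], hw.2⟩))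
  have hlower := integral_Ioi_sub_integral_Ioi_of_halfStrip (F := F) (R := R) (C := C)
    (neg_le_neg hθ')
    (fun w hw => hF w (abs_le.2 ⟨hw.1, by linarith [hw.2]⟩))
    (fun w hw => hdecay w (le_abs.2 (Or.inr (by linarith [hw.2])))
      (abs_le.2 ⟨hw.1, by linarith [hw.2]⟩))
  have hint {a b : ℝ} (ha : |a| ≤ θ') (hb : |b| ≤ θ') :
      IntervalIntegrable (fun y : ℝ => F (R + y * I)) volume a b :=
    intervalIntegrable_vertical (fun w hw => hF w (abs_le.2
      (uIcc_subset_Icc (abs_le.1 ha) (abs_le.1 hb) hw))) R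
  have habs : |θ| ≤ θ' := by rwa [abs_of_nonneg hθ]
  have habs' : |θ'| ≤ θ' := by rw [abs_of_nonneg (hθ.trans hθ')]
  have hsplit := intervalIntegral.integral_add_adjacent_intervals
    (hint (a := -θ') (b := -θ) (by rwa [abs_neg]) (by rwa [abs_neg]))
    (hint (a := -θ) (b := θ') (by rwa [abs_neg]) habs')
  rw [← intervalIntegral.integral_add_adjacent_intervals (hint (by rwa [abs_neg]) habs)
    (hint habs habs')] at hsplit
  unfold hankelIntegral
  rw [← hsplit, smul_add, smul_add, ← hupper, ← hlower]
  abel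

lemma hankelIntegral_eq_sub_integral_line {C δ : ℝ} (hθ : 0 ≤ θ) (hF : HankelAdmissible θ F)
    (hδ : 0 < δ)
    (hleft : ∀ w : ℂ, |w.im| ≤ θ → w.re ≤ 0 → ‖F w‖ ≤ C * Real.exp (δ * w.re)) (R : ℝ) :
    hankelIntegral θ R F = (∫ x : ℝ, F (x + θ * I)) - ∫ x : ℝ, F (x + (-θ : ℝ) * I) := by
  have hline {φ : ℝ} (hφ : |φ| = θ) : Tendsto (fun r : ℝ => ∫ x in Ioi r, F (x + φ * I)) atBot
      (𝓝 (∫ x : ℝ, F (x + φ * I))) := by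
    have hneg : IntegrableOn (fun x : ℝ => F (x + φ * I)) (Iic 0) := by
      refine Integrable.mono' ((integrableOn_exp_mul_Iic hδ 0).const_mul C)
        (continuous_horizontal fun w hw =>
          hF.differentiableAt w (by rw [hw, hφ])).aestronglyMeasurable ?_
      filter_upwards [ae_restrict_mem measurableSet_Iic] with x hx
      simpa using hleft (x + φ * I) (by simp [hφ]) (by simpa using hx)
    have hint : Integrable fun x : ℝ => F (x + φ * I) := by
      rw [← integrableOn_univ, ← Iic_union_Ioi (a := (0 : ℝ))]
      exact hneg.union (hF.integrableOn_ray hφ 0)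
    exact (aecover_Ioi (tendsto_id (x := atBot))).integral_tendsto_of_countably_generated hint
  have hseg : Tendsto (fun r : ℝ => I • ∫ y in (-θ)..θ, F (r + y * I)) atBot (𝓝 0) := by
    refine tendsto_integral_vertical_zero (u := fun r => C * Real.exp (δ * r)) (by linarith) ?_ ?_
    · simpa using
        (Real.tendsto_exp_atBot.comp (tendsto_id.const_mul_atBot hδ)).const_mul C
    · filter_upwards [eventually_le_atBot (0 : ℝ)] with r hr w hw him
      simpa only [hw] using hleft w (abs_le.2 him) (hw ▸ hr)
  have hlim := hseg.add ((hline (abs_of_nonneg hθ)).sub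
    (hline (φ := -θ) (by rw [abs_neg, abs_of_nonneg hθ])))
  rw [zero_add] at hlim
  exact tendsto_nhds_unique (tendsto_const_nhds.congr fun r => hankelIntegral_eq hθ hF R r) hlim

lemma integral_Ioi_eq_neg_of_hasDerivAt [CompleteSpace E] {φ : ℝ} (hφ : |φ| = θ)
    (hF : HankelAdmissible θ F) (hG : HankelAdmissible θ G)
    (hderiv : ∀ w : ℂ, |w.im| ≤ θ → HasDerivAt G (F w) w) (R : ℝ) :
    ∫ x in Ioi R, F (x + φ * I) = -G (R + φ * I) := by
  obtain ⟨C, hC⟩ := hG.decay R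
  have hderiv' (x : ℝ) : HasDerivAt (fun x : ℝ => G (x + φ * I)) (F (x + φ * I)) x := by
    simpa [Function.comp_def] using HasDerivAt.scomp x (hderiv (x + φ * I) (by simp [hφ]))
      (Complex.ofRealCLM.hasDerivAt.add_const (φ * I))
  have hlim : Tendsto (fun x : ℝ => G (x + φ * I)) atTop (𝓝 0) := by
    refine squeeze_zero_norm' (a := fun x : ℝ => C * Real.exp (-x)) ?_
      (by simpa using Real.tendsto_exp_neg_atTop_nhds_zero.const_mul C)
    filter_upwards [eventually_ge_atTop R] with x hx
    simpa using hC (x + φ * I) (by simp [hφ]) (by simpa using hx)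
  simpa using integral_Ioi_of_hasDerivAt_of_tendsto (hderiv' R).continuousAt.continuousWithinAt
    (fun x _ => hderiv' x) (hF.integrableOn_ray hφ R) hlim

lemma hankelIntegral_eq_zero_of_hasDerivAt [CompleteSpace E] (hθ : 0 ≤ θ)
    (hF : HankelAdmissible θ F) (hG : HankelAdmissible θ G)
    (hderiv : ∀ w : ℂ, |w.im| ≤ θ → HasDerivAt G (F w) w) (R : ℝ) :
    hankelIntegral θ R F = 0 := by
  have hseg : I • (∫ y in (-θ)..θ, F (R + y * I)) = G (R + θ * I) - G (R + (-θ : ℝ) * I) := by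
    rw [← intervalIntegral.integral_smul]
    refine intervalIntegral.integral_eq_sub_of_hasDerivAt (f := fun y : ℝ => G (R + y * I))
      (fun y hy => ?_) ((hF.intervalIntegrable hθ R).smul I)
    rw [uIcc_of_le (by linarith)] at hy
    simpa [Function.comp_def] using HasDerivAt.scomp y
      (hderiv (R + y * I) (by simpa [abs_le] using hy))
      ((Complex.ofRealCLM.hasDerivAt.mul_const I).const_add (R : ℂ))
  rw [hankelIntegral, hseg,
    integral_Ioi_eq_neg_of_hasDerivAt (abs_of_nonneg hθ) hF hG hderiv R,
    integral_Ioi_eq_neg_of_hasDerivAt (φ := -θ) (by rw [abs_neg, abs_of_nonneg hθ]) hF hG hderiv R]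
  abel

lemma exists_norm_hankelIntegral_le (E' : Type*) [NormedAddCommGroup E'] [NormedSpace ℂ E']
    (hθ : 0 ≤ θ) (hF : HankelAdmissible θ F) (R : ℝ) :
    ∃ L : ℝ, ∀ (D : ℂ → E') (c : ℝ), (∀ w : ℂ, |w.im| ≤ θ → ‖D w‖ ≤ c * ‖F w‖) →
      ‖hankelIntegral θ R D‖ ≤ c * L := by
  refine ⟨(∫ y in (-θ)..θ, ‖F (R + y * I)‖) + ((∫ x in Ioi R, ‖F (x + θ * I)‖) +
    ∫ x in Ioi R, ‖F (x + (-θ : ℝ) * I)‖), fun D c hD => ?_⟩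
  have hseg : ‖I • ∫ y in (-θ)..θ, D (R + y * I)‖ ≤ c * ∫ y in (-θ)..θ, ‖F (R + y * I)‖ := by
    rw [norm_smul, Complex.norm_I, one_mul, ← intervalIntegral.integral_const_mul]
    refine intervalIntegral.norm_integral_le_of_norm_le (by linarith) (.of_forall fun y hy => ?_)
      ((hF.intervalIntegrable hθ R).norm.const_mul c)
    exact hD _ (by simpa [abs_le] using Ioc_subset_Icc_self hy)
  have hray {φ : ℝ} (hφ : |φ| = θ) :
      ‖∫ x in Ioi R, D (x + φ * I)‖ ≤ c * ∫ x in Ioi R, ‖F (x + φ * I)‖ := by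
    rw [← integral_const_mul]
    exact norm_integral_le_of_norm_le ((hF.integrableOn_ray hφ R).norm.const_mul c)
      (.of_forall fun x => hD _ (by simp [hφ]))
  rw [mul_add, mul_add]
  exact (norm_add_le _ _).trans (add_le_add hseg ((norm_sub_le _ _).trans
    (add_le_add (hray (abs_of_nonneg hθ)) (hray (by rw [abs_neg, abs_of_nonneg hθ])))))

lemma hasSum_hankelIntegral {E' : Type*} [NormedAddCommGroup E'] [NormedSpace ℂ E'] {R : ℝ}
    {f : ℕ → ℂ → E} {g : ℂ → E'} {S : ℂ → E} {u : ℕ → ℝ} (hθ : 0 ≤ θ)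
    (hf : ∀ k, HankelAdmissible θ (f k)) (hg : HankelAdmissible θ g) (hu : Summable u)
    (hfg : ∀ k w, R ≤ w.re → ‖f k w‖ ≤ ‖g w‖ * u k)
    (hS : ∀ w, R ≤ w.re → HasSum (fun k => f k w) (S w)) :
    HasSum (fun k => hankelIntegral θ R (f k)) (hankelIntegral θ R S) := by
  have hray {φ : ℝ} (hφ : |φ| = θ) :
      HasSum (fun k => ∫ x in Ioi R, f k (x + φ * I)) (∫ x in Ioi R, S (x + φ * I)) := by
    have hmem : ∀ᵐ x : ℝ ∂volume.restrict (Ioi R), R ≤ ((x : ℂ) + φ * I).re := by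
      filter_upwards [ae_restrict_mem measurableSet_Ioi] with x hx
      simpa using (mem_Ioi.1 hx).le
    refine hasSum_integral_of_dominated_convergence (fun k x => ‖g (x + φ * I)‖ * u k)
      (fun k => ((hf k).integrableOn_ray hφ R).aestronglyMeasurable)
      (fun k => hmem.mono fun x hx => hfg k _ hx) (.of_forall fun x => hu.mul_left _) ?_
      (hmem.mono fun x hx => hS _ hx)
    simp only [tsum_mul_left]
    exact (hg.integrableOn_ray hφ R).norm.mul_const _
  have hseg : HasSum (fun k => ∫ y in (-θ)..θ, f k (R + y * I))
      (∫ y in (-θ)..θ, S (R + y * I)) := by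
    refine intervalIntegral.hasSum_integral_of_dominated_convergence
      (fun k y => ‖g (R + y * I)‖ * u k)
      (fun k => ((hf k).intervalIntegrable hθ R).def'.aestronglyMeasurable)
      (fun k => .of_forall fun y _ => hfg k _ (by simp)) (.of_forall fun y _ => hu.mul_left _) ?_
      (.of_forall fun y _ => hS _ (by simp))
    simp only [tsum_mul_left]
    exact (hg.intervalIntegrable hθ R).norm.mul_const _
  exact (hseg.const_smul I).add
    ((hray (abs_of_nonneg hθ)).sub (hray (by rw [abs_neg, abs_of_nonneg hθ])))

end HankelContour

section HankelFormula

open Complex (I)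
open Set
open scoped Real

/-- The integrand `exp ζ * ζ ^ (-z) dζ` of Hankel's formula for `1 / Γ z`, written in the
logarithmic coordinate `ζ = exp w`. -/
noncomputable def hankelKernel (z w : ℂ) : ℂ :=
  Complex.exp (Complex.exp w) * Complex.exp ((1 - z) * w)

lemma differentiable_hankelKernel (z : ℂ) : Differentiable ℂ (hankelKernel z) := by
  unfold hankelKernel
  fun_prop

lemma hankelKernel_add (z z' w : ℂ) :
    hankelKernel (z + z') w = hankelKernel z w * Complex.exp (-(z' * w)) := by
  rw [hankelKernel, hankelKernel, mul_assoc, ← Complex.exp_add ((1 - z) * w)]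
  ring_nf

lemma norm_hankelKernel_le (z : ℂ) {w : ℂ} (hw : |w.im| ≤ π) :
    ‖hankelKernel z w‖ ≤ Real.exp (|z.im| * π) *
      (Real.exp (Real.exp w.re * Real.cos w.im) * Real.exp ((1 - z.re) * w.re)) := by
  have hmul : z.im * w.im ≤ |z.im| * π := (le_abs_self _).trans (by rw [abs_mul]; gcongr)
  calc ‖hankelKernel z w‖
      = Real.exp (z.im * w.im) *
          (Real.exp (Real.exp w.re * Real.cos w.im) * Real.exp ((1 - z.re) * w.re)) := by
        rw [hankelKernel, norm_mul, Complex.norm_exp, Complex.norm_exp, Complex.exp_re,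
          ← Real.exp_add, ← Real.exp_add, ← Real.exp_add]
        congr 1
        simp
        ring
    _ ≤ _ := by gcongr

lemma exists_exp_neg_exp_mul_exp_le {c : ℝ} (hc : 0 < c) (β R : ℝ) :
    ∃ C, ∀ x, R ≤ x → Real.exp (Real.exp x * (-c)) * Real.exp (β * x) ≤ C * Real.exp (-x) := by
  have hcont : Continuous fun x : ℝ => Real.exp (Real.exp x * (-c)) * Real.exp ((β + 1) * x) := by
    fun_prop
  have hlim : Tendsto (fun x : ℝ => Real.exp (Real.exp x * (-c)) * Real.exp ((β + 1) * x))
      atTop (𝓝 0) := by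
    refine ((tendsto_rpow_mul_exp_neg_mul_atTop_nhds_zero (β + 1) c hc).comp
      Real.tendsto_exp_atTop).congr fun x => ?_
    rw [Function.comp_apply, ← Real.exp_mul, mul_comm]
    ring_nf
  obtain ⟨N, hN⟩ := eventually_atTop.1 (hlim.eventually (eventually_le_nhds one_pos))
  obtain ⟨M, hM⟩ := isCompact_Icc.bddAbove_image (hcont.continuousOn (s := Icc R N))
  refine ⟨max 1 M, fun x hx => ?_⟩
  have hbound : Real.exp (Real.exp x * (-c)) * Real.exp ((β + 1) * x) ≤ max 1 M := by
    rcases le_total N x with h | h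
    · exact (hN x h).trans (le_max_left _ _)
    · exact (hM ⟨x, ⟨hx, h⟩, rfl⟩).trans (le_max_right _ _)
  have hsplit : Real.exp (β * x) = Real.exp ((β + 1) * x) * Real.exp (-x) := by
    rw [← Real.exp_add]
    ring_nf
  rw [hsplit, ← mul_assoc]
  gcongr

lemma exists_norm_hankelKernel_le {θ : ℝ} (hθ : π / 2 < θ) (hθ' : θ ≤ π) (z : ℂ) (R : ℝ) :
    ∃ C, ∀ w : ℂ, θ ≤ |w.im| → |w.im| ≤ π → R ≤ w.re →
      ‖hankelKernel z w‖ ≤ C * Real.exp (-w.re) := by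
  have hcos : 0 < -Real.cos θ := by
    linarith [Real.cos_neg_of_pi_div_two_lt_of_lt hθ (by linarith [Real.pi_pos])]
  obtain ⟨C, hC⟩ := exists_exp_neg_exp_mul_exp_le hcos (1 - z.re) R
  refine ⟨Real.exp (|z.im| * π) * C, fun w hw hw' hR => (norm_hankelKernel_le z hw').trans ?_⟩
  have hcos_le : Real.cos w.im ≤ - -Real.cos θ := by
    rw [neg_neg, ← Real.cos_abs w.im]
    exact Real.cos_le_cos_of_nonneg_of_le_pi (by linarith [Real.pi_pos]) hw' hw
  rw [mul_assoc]
  refine mul_le_mul_of_nonneg_left (le_trans ?_ (hC _ hR)) (Real.exp_pos _).le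
  gcongr

lemma hankelAdmissible_hankelKernel {θ : ℝ} (hθ : π / 2 < θ) (hθ' : θ ≤ π) (z : ℂ) :
    HankelAdmissible θ (hankelKernel z) where
  differentiableAt w _ := differentiable_hankelKernel z w
  decay R := by
    obtain ⟨C, hC⟩ := exists_norm_hankelKernel_le hθ hθ' z R
    exact ⟨C, fun w hw => hC w hw.ge (hw.le.trans hθ')⟩

lemma hankelIntegral_hankelKernel_eq_angle_pi {θ : ℝ} (hθ : π / 2 < θ) (hθ' : θ ≤ π) (z : ℂ)
    (R : ℝ) : hankelIntegral θ R (hankelKernel z) = hankelIntegral π R (hankelKernel z) := by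
  obtain ⟨C, hC⟩ := exists_norm_hankelKernel_le hθ hθ' z R
  exact hankelIntegral_eq_of_angle_le (by linarith [Real.pi_pos]) hθ'
    (fun w _ => differentiable_hankelKernel z w) hC

lemma norm_hankelKernel_le_of_re_nonpos (z : ℂ) {w : ℂ} (hw : |w.im| ≤ π) (hre : w.re ≤ 0) :
    ‖hankelKernel z w‖ ≤
      Real.exp (|z.im| * π) * Real.exp 1 * Real.exp ((1 - z.re) * w.re) := by
  refine (norm_hankelKernel_le z hw).trans ?_
  rw [mul_assoc]
  gcongr
  nlinarith [Real.cos_le_one w.im, Real.exp_pos w.re, Real.exp_le_one_iff.2 hre]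

lemma integral_exp_neg_exp_mul_exp {s : ℂ} (hs : 0 < s.re) :
    ∫ x : ℝ, Complex.exp (-Complex.exp x) * Complex.exp (s * x) = Complex.Gamma s := by
  have hsubst := integral_image_eq_integral_abs_deriv_smul (f := Real.exp) MeasurableSet.univ
    (fun x _ => (Real.hasDerivAt_exp x).hasDerivWithinAt) Real.exp_injective.injOn
    (fun x : ℝ => (Real.exp (-x) : ℂ) * (x : ℂ) ^ (s - 1))
  rw [image_univ, Real.range_exp, setIntegral_univ] at hsubst
  rw [Complex.Gamma_eq_integral hs, Complex.GammaIntegral, hsubst]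
  congr 1
  ext x
  have hpow : ((Real.exp x : ℝ) : ℂ) ^ (s - 1) = Complex.exp ((s - 1) * x) := by
    rw [Complex.cpow_def_of_ne_zero (by simp), ← Complex.ofReal_log (Real.exp_pos x).le,
      Real.log_exp, mul_comm]
  rw [hpow, abs_of_pos (Real.exp_pos _), Complex.real_smul]
  push_cast
  rw [← Complex.exp_add, ← Complex.exp_add, ← Complex.exp_add]
  ring_nf

lemma integral_hankelKernel_horizontal {z : ℂ} (hz : z.re < 1) {φ : ℝ}
    (hφ : Complex.exp (φ * I) = -1) :
    ∫ x : ℝ, hankelKernel z (x + φ * I) =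
      Complex.exp ((1 - z) * (φ * I)) * Complex.Gamma (1 - z) := by
  rw [← integral_exp_neg_exp_mul_exp (by simpa using hz), ← integral_const_mul]
  congr 1
  ext x
  rw [hankelKernel, Complex.exp_add, hφ, mul_add, Complex.exp_add, mul_neg_one]
  ring

lemma inv_Gamma_eq_Gamma_one_sub_mul_sin {z : ℂ} (hz : z.re < 1) :
    (Complex.Gamma z)⁻¹ = Complex.Gamma (1 - z) * Complex.sin (π * z) / π := by
  have hG : Complex.Gamma (1 - z) ≠ 0 := Complex.Gamma_ne_zero_of_re_pos (by simpa using hz)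
  rw [eq_div_of_mul_eq hG (Complex.Gamma_mul_Gamma_one_sub z), inv_div, div_div_eq_mul_div]

lemma hankelIntegral_hankelKernel_of_re_lt_one {z : ℂ} (hz : z.re < 1) (R : ℝ) :
    hankelIntegral π R (hankelKernel z) = 2 * π * I * (Complex.Gamma z)⁻¹ := by
  -- The edges `im w = ±π` of the contour are the two sides of the cut of `ζ ^ (-z)`.
  have hexp : Complex.exp ((-π : ℝ) * I) = -1 := by
    rw [Complex.ofReal_neg, neg_mul, Complex.exp_neg, Complex.exp_pi_mul_I, inv_neg_one]
  have hsin : Complex.exp ((1 - z) * (π * I)) - Complex.exp ((1 - z) * ((-π : ℝ) * I)) =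
      2 * I * Complex.sin (π * z) := by
    rw [← Complex.sin_pi_sub, mul_right_comm, Complex.two_sin, mul_assoc, Complex.I_mul_I]
    push_cast
    ring_nf
  rw [hankelIntegral_eq_sub_integral_line Real.pi_pos.le
      (hankelAdmissible_hankelKernel (by linarith [Real.pi_pos]) le_rfl z) (sub_pos.2 hz)
      (fun w hw hre => norm_hankelKernel_le_of_re_nonpos z hw hre),
    integral_hankelKernel_horizontal hz Complex.exp_pi_mul_I,
    integral_hankelKernel_horizontal hz hexp, ← sub_mul, hsin,
    inv_Gamma_eq_Gamma_one_sub_mul_sin hz]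
  have hpi : (π : ℂ) ≠ 0 := Complex.ofReal_ne_zero.2 Real.pi_ne_zero
  field_simp

lemma integral_exp_exp_vertical (R : ℝ) :
    ∫ y in (-π)..π, Complex.exp (Complex.exp (R + y * I)) = 2 * π := by
  have hper : Function.Periodic (fun y : ℝ => Complex.exp (Complex.exp (R + y * I))) (2 * π) := by
    intro y
    simp only [Complex.ofReal_add, add_mul, ← add_assoc]
    push_cast
    rw [Complex.exp_periodic]
  have hmean := (Complex.differentiable_exp.diffContOnCl
    (s := Metric.ball (0 : ℂ) |Real.exp R|)).circleAverage
  rw [Real.circleAverage_def, Complex.exp_zero] at hmean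
  have hcircle : ∫ y in (0 : ℝ)..2 * π, Complex.exp (circleMap 0 (Real.exp R) y) = 2 * π := by
    simpa using (inv_smul_eq_iff₀ Real.two_pi_pos.ne').1 hmean
  calc ∫ y in (-π)..π, Complex.exp (Complex.exp (R + y * I))
      = ∫ y in (0 : ℝ)..2 * π, Complex.exp (Complex.exp (R + y * I)) := by
        simpa [two_mul] using hper.intervalIntegral_add_eq (-π) 0
    _ = 2 * π := by
        simpa [circleMap, Complex.exp_add] using hcircle

lemma hankelIntegral_hankelKernel_one (R : ℝ) :
    hankelIntegral π R (hankelKernel 1) = 2 * π * I := by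
  have hkernel (w : ℂ) : hankelKernel 1 w = Complex.exp (Complex.exp w) := by simp [hankelKernel]
  have hedges (x : ℝ) : Complex.exp (x + π * I) = Complex.exp (x + (-π : ℝ) * I) := by
    rw [← Complex.exp_periodic (x + (-π : ℝ) * I)]
    push_cast
    ring_nf
  simp only [hankelIntegral, hkernel, hedges, sub_self, add_zero, integral_exp_exp_vertical,
    smul_eq_mul]
  ring

lemma hasDerivAt_hankelKernel_add_one (z w : ℂ) :
    HasDerivAt (hankelKernel (z + 1)) (hankelKernel z w + hankelKernel (z + 1) w • -z) w := by
  refine ((Complex.hasDerivAt_exp w).cexp.mul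
    ((hasDerivAt_id w).const_mul (1 - (z + 1))).cexp).congr_deriv ?_
  have hexp : Complex.exp ((1 - z) * w) = Complex.exp w * Complex.exp ((1 - (z + 1)) * w) := by
    rw [← Complex.exp_add]
    ring_nf
  simp only [hankelKernel, hexp, id, smul_eq_mul]
  ring

lemma hankelIntegral_hankelKernel_eq_mul_add_one {θ : ℝ} (hθ : π / 2 < θ) (hθ' : θ ≤ π)
    (z : ℂ) (R : ℝ) : hankelIntegral θ R (hankelKernel z) =
      z * hankelIntegral θ R (hankelKernel (z + 1)) := by
  have hadm (z : ℂ) := hankelAdmissible_hankelKernel hθ hθ' z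
  have hzero : 0 ≤ θ := by linarith [Real.pi_pos]
  have hderiv := hankelIntegral_eq_zero_of_hasDerivAt hzero
    ((hadm z).add ((hadm (z + 1)).smul_const (-z))) (hadm (z + 1))
    (fun w _ => hasDerivAt_hankelKernel_add_one z w) R
  rw [hankelIntegral_add hzero (hadm z) ((hadm (z + 1)).smul_const (-z)),
    hankelIntegral_smul_const] at hderiv
  linear_combination hderiv

theorem hankelIntegral_hankelKernel {θ : ℝ} (hθ : π / 2 < θ) (hθ' : θ ≤ π) (z : ℂ) (R : ℝ) :
    hankelIntegral θ R (hankelKernel z) = 2 * π * I * (Complex.Gamma z)⁻¹ := by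
  rw [hankelIntegral_hankelKernel_eq_angle_pi hθ hθ']
  suffices h : ∀ (n : ℕ) (z : ℂ), z.re < n + 1 →
      hankelIntegral π R (hankelKernel z) = 2 * π * I * (Complex.Gamma z)⁻¹ by
    obtain ⟨n, hn⟩ := exists_nat_gt z.re
    exact h n z (by linarith)
  intro n
  induction n with
  | zero => exact fun z hz => hankelIntegral_hankelKernel_of_re_lt_one (by simpa using hz) R
  | succ n ih =>
    intro z hz
    obtain rfl | hz1 := eq_or_ne z 1
    · simpa using hankelIntegral_hankelKernel_one R
    · have hrec := hankelIntegral_hankelKernel_eq_mul_add_one (by linarith [Real.pi_pos])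
        le_rfl (z - 1) R
      have hGamma := Complex.one_div_Gamma_eq_self_mul_one_div_Gamma_add_one (z - 1)
      rw [ih (z - 1) (by simp; push_cast at hz; linarith), hGamma, sub_add_cancel] at hrec
      refine mul_left_cancel₀ (sub_ne_zero.2 hz1) ?_
      linear_combination -hrec

end HankelFormula

section Resolvent

open Set
open scoped Real

/-- The closed sector of half-opening `φ` around the positive real axis; since `arg 0 = 0`, it
contains the apex `0` as soon as `0 ≤ φ`. -/
def closedSector (φ : ℝ) : Set ℂ := {z | |z.arg| ≤ φ}

lemma closedSector_eq_setOf_norm_mul_cos_le {φ : ℝ} (hφ : 0 ≤ φ) (hφ' : φ ≤ π) :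
    closedSector φ = {z | ‖z‖ * Real.cos φ ≤ z.re} := by
  ext z
  obtain rfl | hz := eq_or_ne z 0
  · simpa [closedSector] using hφ
  · rw [closedSector, mem_ofPred_eq, mem_ofPred_eq, mul_comm, ← le_div_iff₀ (norm_pos_iff.2 hz),
      ← Complex.cos_arg hz, ← Real.cos_abs z.arg]
    exact (Real.strictAntiOn_cos.le_iff_ge ⟨hφ, hφ'⟩ ⟨abs_nonneg _, Complex.abs_arg_le_pi z⟩).symm

lemma isClosed_closedSector {φ : ℝ} (hφ : 0 ≤ φ) : IsClosed (closedSector φ) := by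
  have hmin : closedSector φ = closedSector (min φ π) := by
    ext z
    simp [closedSector, Complex.abs_arg_le_pi z]
  rw [hmin, closedSector_eq_setOf_norm_mul_cos_le (le_min hφ Real.pi_pos.le) (min_le_right _ _)]
  exact isClosed_le (by fun_prop) Complex.continuous_re

lemma abs_arg_exp_le_abs_im (w : ℂ) : |(Complex.exp w).arg| ≤ |w.im| := by
  by_cases hw : w.im ∈ Ioc (-π) π
  · rw [← Complex.log_im, Complex.log_exp hw.1 hw.2]
  · refine (Complex.abs_arg_le_pi _).trans (le_abs.2 ?_)
    by_contra! h
    exact hw ⟨by linarith [h.2], h.1.le⟩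

lemma zero_mem_closedSector {φ : ℝ} (hφ : 0 ≤ φ) : (0 : ℂ) ∈ closedSector φ := by
  simpa [closedSector] using hφ

lemma exp_mul_mem_closedSector {α θ : ℝ} (hα : 0 ≤ α) {w : ℂ} (hw : |w.im| ≤ θ) :
    Complex.exp (α * w) ∈ closedSector (α * θ) := by
  refine (abs_arg_exp_le_abs_im _).trans ?_
  rw [Complex.im_ofReal_mul, abs_mul, abs_of_nonneg hα]
  gcongr

lemma ofReal_mul_mem_closedSector {r φ : ℝ} (hr : 0 < r) {z : ℂ} (hz : z ∈ closedSector φ) :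
    (r : ℂ) * z ∈ closedSector φ := by
  rwa [closedSector, mem_ofPred_eq, Complex.arg_real_mul z hr]

variable {𝔸 : Type*} [NormedRing 𝔸] [NormedAlgebra ℂ 𝔸]

lemma resolvent_sub_resolvent_zero {a : 𝔸} {z : ℂ} (hz : z ∈ resolventSet ℂ a)
    (h0 : (0 : ℂ) ∈ resolventSet ℂ a) :
    resolvent a z - resolvent a (0 : ℂ) = -(z • (resolvent a z * resolvent a (0 : ℂ))) := by
  obtain ⟨u, hu⟩ := hz
  obtain ⟨v, hv⟩ := h0
  have hsub : z • (1 : 𝔸) = u - v := by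
    rw [hu, hv, map_zero, Algebra.algebraMap_eq_smul_one]
    abel
  have hsmul : z • ((↑u⁻¹ : 𝔸) * ↑v⁻¹) = ↑u⁻¹ * (z • (1 : 𝔸)) * ↑v⁻¹ := by simp
  rw [resolvent, resolvent, ← hu, ← hv, Ring.inverse_unit, Ring.inverse_unit, hsmul, hsub,
    mul_sub, sub_mul]
  simp

lemma resolvent_smul {r : ℂ} (hr : r ≠ 0) (a : 𝔸) (z : ℂ) :
    resolvent (r • a) z = r⁻¹ • resolvent a (r⁻¹ * z) := by
  have h := spectrum.units_smul_resolvent (r := (Units.mk0 r hr)⁻¹) (s := r⁻¹ * z) (a := a)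
  simpa [Units.smul_def, hr] using h.symm

variable [CompleteSpace 𝔸]

lemma hasSum_resolvent {b : 𝔸} {z : ℂ} (h : ‖b‖ < ‖z‖) :
    HasSum (fun k : ℕ => z⁻¹ ^ (k + 1) • b ^ k) (resolvent b z) := by
  have hz : z ≠ 0 := norm_pos_iff.1 ((norm_nonneg b).trans_lt h)
  have hb : ‖z⁻¹ • b‖ < 1 := by
    rwa [norm_smul, norm_inv, inv_mul_lt_iff₀ (norm_pos_iff.2 hz), mul_one]
  have hres : resolvent b z = z⁻¹ • ∑' k : ℕ, (z⁻¹ • b) ^ k := by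
    have h1 := resolvent_smul (inv_ne_zero hz) b 1
    rw [inv_inv, mul_one, resolvent, map_one, ← geom_series_eq_inverse _ hb] at h1
    rw [h1, smul_smul, inv_mul_cancel₀ hz, one_smul]
  rw [hres]
  convert (summable_geometric_of_norm_lt_one hb).hasSum.const_smul z⁻¹ using 2 with k
  rw [smul_pow, smul_smul, pow_succ']

lemma exists_norm_resolvent_le {a : 𝔸} {S : Set ℂ} (hS : IsClosed S)
    (hSa : S ⊆ resolventSet ℂ a) : ∃ M, ∀ z ∈ S, ‖resolvent a z‖ ≤ M := by
  have hinfty : ∀ᶠ z in Bornology.cobounded ℂ, ‖resolvent a z‖ ≤ 1 := by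
    have h := (spectrum.resolvent_tendsto_cobounded (𝕜 := ℂ) a).norm
    rw [norm_zero] at h
    exact h.eventually (eventually_le_nhds one_pos)
  obtain ⟨r, -, hr⟩ := hasBasis_cobounded_norm.eventually_iff.1 hinfty
  have hcont : ContinuousOn (resolvent a) (S ∩ Metric.closedBall (0 : ℂ) r) := fun z hz =>
    (spectrum.hasDerivAt_resolvent_const_left (hSa hz.1)).continuousAt.continuousWithinAt
  obtain ⟨M, hM⟩ :=
    ((isCompact_closedBall (0 : ℂ) r).inter_left hS).exists_bound_of_continuousOn hcont
  refine ⟨max 1 M, fun z hz => ?_⟩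
  rcases le_total r ‖z‖ with h | h
  · exact (hr h).trans (le_max_left _ _)
  · exact (hM z ⟨hz, by simpa using h⟩).trans (le_max_right _ _)

end Resolvent

section MittagLeffler

open Complex (I)
open Set
open scoped Real

variable {𝔸 : Type*} [NormedRing 𝔸]

lemma norm_pow_le_max_one_mul (b : 𝔸) (k : ℕ) : ‖b ^ k‖ ≤ max 1 ‖(1 : 𝔸)‖ * ‖b‖ ^ k := by
  rcases k.eq_zero_or_pos with rfl | hk
  · simp
  · exact (norm_pow_le' b hk).trans (le_mul_of_one_le_left (by positivity) (le_max_left _ _))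

variable [NormedAlgebra ℂ 𝔸]

/-- The two-parameter Mittag-Leffler function `E_{α,β}` on a complex Banach algebra. -/
noncomputable def mittagLeffler (α : ℝ) (β : ℂ) (b : 𝔸) : 𝔸 :=
  ∑' k : ℕ, (Complex.Gamma (α * k + β))⁻¹ • b ^ k

lemma hankelKernel_eq_mul_exp_pow (α : ℝ) (β : ℂ) (k : ℕ) (w : ℂ) :
    hankelKernel (α * k + β) w = hankelKernel β w * (Complex.exp (α * w))⁻¹ ^ k := by
  rw [← Complex.exp_neg, ← Complex.exp_nat_mul, add_comm, hankelKernel_add]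
  ring_nf

lemma hankelKernel_sub (α : ℝ) (β w : ℂ) :
    hankelKernel (β - α) w = hankelKernel β w * Complex.exp (α * w) := by
  rw [sub_eq_add_neg, hankelKernel_add, neg_mul, neg_neg]

variable [CompleteSpace 𝔸] {α θ : ℝ}

lemma hasSum_hankelIntegral_resolvent (hα : 0 < α) (hθ : π / 2 < θ) (hθ' : θ ≤ π) (β : ℂ)
    (b : 𝔸) {R : ℝ} (hR : 2 * ‖b‖ < Real.exp (α * R)) :
    HasSum (fun k : ℕ => (2 * π * I * (Complex.Gamma (α * k + β))⁻¹) • b ^ k)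
      (hankelIntegral θ R fun w => hankelKernel (β - α) w • resolvent b (Complex.exp (α * w))) := by
  have hlarge {w : ℂ} (hw : R ≤ w.re) : 2 * ‖b‖ < ‖Complex.exp (α * w)‖ := by
    rw [Complex.norm_exp, Complex.re_ofReal_mul]
    exact hR.trans_le (by gcongr)
  have hbound (k : ℕ) (w : ℂ) (hw : R ≤ w.re) : ‖hankelKernel (α * k + β) w • b ^ k‖ ≤
      ‖hankelKernel β w‖ * (max 1 ‖(1 : 𝔸)‖ * (1 / 2) ^ k) := by
    have hratio : ‖Complex.exp (α * w)‖⁻¹ * ‖b‖ ≤ 1 / 2 := by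
      rw [inv_mul_le_iff₀ (norm_pos_iff.2 (Complex.exp_ne_zero _))]
      linarith [hlarge hw]
    rw [norm_smul, hankelKernel_eq_mul_exp_pow, norm_mul, norm_pow, norm_inv, mul_assoc]
    refine mul_le_mul_of_nonneg_left ?_ (norm_nonneg _)
    calc ‖Complex.exp (α * w)‖⁻¹ ^ k * ‖b ^ k‖
        ≤ ‖Complex.exp (α * w)‖⁻¹ ^ k * (max 1 ‖(1 : 𝔸)‖ * ‖b‖ ^ k) := by
          gcongr
          exact norm_pow_le_max_one_mul b k
      _ = max 1 ‖(1 : 𝔸)‖ * (‖Complex.exp (α * w)‖⁻¹ * ‖b‖) ^ k := by ring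
      _ ≤ max 1 ‖(1 : 𝔸)‖ * (1 / 2) ^ k := by gcongr
  have hsum (w : ℂ) (hw : R ≤ w.re) : HasSum (fun k : ℕ => hankelKernel (α * k + β) w • b ^ k)
      (hankelKernel (β - α) w • resolvent b (Complex.exp (α * w))) := by
    convert (hasSum_resolvent (b := b) (z := Complex.exp (α * w))
      (by linarith [hlarge hw, norm_nonneg b])).const_smul (hankelKernel (β - α) w) using 2 with k
    rw [smul_smul, hankelKernel_eq_mul_exp_pow, hankelKernel_sub, pow_succ', mul_assoc,
      mul_inv_cancel_left₀ (Complex.exp_ne_zero _)]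
  have hadm (z : ℂ) := hankelAdmissible_hankelKernel hθ hθ' z
  simpa only [hankelIntegral_smul_const, hankelIntegral_hankelKernel hθ hθ'] using
    hasSum_hankelIntegral (by linarith [Real.pi_pos]) (fun k => (hadm _).smul_const (b ^ k))
      (hadm β) ((summable_geometric_two).mul_left _) hbound hsum

lemma exists_lt_exp_mul (hα : 0 < α) (c : ℝ) : ∃ R : ℝ, c < Real.exp (α * R) :=
  ((Real.tendsto_exp_atTop.comp (tendsto_id.const_mul_atTop hα)).eventually_gt_atTop c).exists

lemma summable_norm_inv_Gamma_mul_pow (hα : 0 < α) (β : ℂ) (r : ℝ) :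
    Summable fun k : ℕ => ‖(Complex.Gamma (α * k + β))⁻¹‖ * |r| ^ k := by
  obtain ⟨R, hR⟩ := exists_lt_exp_mul hα (2 * ‖(r : ℂ)‖)
  have hsum := (hasSum_hankelIntegral_resolvent hα (θ := π) (by linarith [Real.pi_pos]) le_rfl β
    (r : ℂ) hR).summable.norm.mul_left ‖(2 * π * I : ℂ)‖⁻¹
  refine hsum.congr fun k => ?_
  rw [norm_smul, norm_mul _ (Complex.Gamma _)⁻¹, mul_assoc ‖_‖, norm_pow, Complex.norm_real,
    Real.norm_eq_abs, inv_mul_cancel_left₀ (norm_ne_zero_iff.2 Complex.two_pi_I_ne_zero)]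

lemma continuous_mittagLeffler (hα : 0 < α) (β : ℂ) :
    Continuous (mittagLeffler α β : 𝔸 → 𝔸) := by
  have hball (r : ℝ) : ContinuousOn (mittagLeffler α β : 𝔸 → 𝔸) (Metric.ball 0 r) := by
    refine continuousOn_tsum (fun k => by fun_prop)
      ((summable_norm_inv_Gamma_mul_pow hα β r).mul_left (max 1 ‖(1 : 𝔸)‖)) fun k b hb => ?_
    have hb' : ‖b‖ ≤ |r| := (mem_ball_zero_iff.1 hb).le.trans (le_abs_self r)
    calc ‖(Complex.Gamma (α * k + β))⁻¹ • b ^ k‖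
        ≤ ‖(Complex.Gamma (α * k + β))⁻¹‖ * (max 1 ‖(1 : 𝔸)‖ * ‖b‖ ^ k) := by
          rw [norm_smul]
          gcongr
          exact norm_pow_le_max_one_mul b k
      _ ≤ ‖(Complex.Gamma (α * k + β))⁻¹‖ * (max 1 ‖(1 : 𝔸)‖ * |r| ^ k) := by gcongr
      _ = _ := mul_left_comm _ _ _
  exact continuous_iff_continuousAt.2 fun b => (hball (‖b‖ + 1)).continuousAt
    (Metric.isOpen_ball.mem_nhds (by simp))

lemma hankelAdmissible_hankelKernel_smul_resolvent (hθ : π / 2 < θ) (hθ' : θ ≤ π) (z : ℂ) {b : 𝔸}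
    {M : ℝ} (hb : ∀ w : ℂ, |w.im| ≤ θ → Complex.exp (α * w) ∈ resolventSet ℂ b)
    (hM : ∀ w : ℂ, |w.im| ≤ θ → ‖resolvent b (Complex.exp (α * w))‖ ≤ M) :
    HankelAdmissible θ fun w => hankelKernel z w • resolvent b (Complex.exp (α * w)) := by
  refine (hankelAdmissible_hankelKernel hθ hθ' z).smul_of_norm_le (fun w hw => ?_)
    fun w hw => hM w hw.le
  exact (spectrum.hasDerivAt_resolvent_const_left (hb w hw)).differentiableAt.comp w
    (f := fun w : ℂ => Complex.exp (α * w)) (by fun_prop)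

lemma hankelIntegral_resolvent_eq_smul_mittagLeffler (hα : 0 < α) (hθ : π / 2 < θ) (hθ' : θ ≤ π)
    (β : ℂ) {b : 𝔸} {M : ℝ}
    (hb : ∀ w : ℂ, |w.im| ≤ θ → Complex.exp (α * w) ∈ resolventSet ℂ b)
    (hM : ∀ w : ℂ, |w.im| ≤ θ → ‖resolvent b (Complex.exp (α * w))‖ ≤ M) (R : ℝ) :
    hankelIntegral θ R (fun w => hankelKernel (β - α) w • resolvent b (Complex.exp (α * w))) =
      (2 * π * I : ℂ) • mittagLeffler α β b := by
  obtain ⟨R', hR'⟩ := exists_lt_exp_mul hα (2 * ‖b‖)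
  have hsum := hasSum_hankelIntegral_resolvent hα hθ hθ' β b hR'
  rw [hankelIntegral_eq (by linarith [Real.pi_pos])
    (hankelAdmissible_hankelKernel_smul_resolvent hθ hθ' _ hb hM) R R', ← hsum.tsum_eq]
  simp only [mul_smul (2 * π * I : ℂ), mittagLeffler, tsum_const_smul'' (2 * π * I : ℂ)]

lemma exists_norm_mittagLeffler_sub_le (hα : 0 < α) (hθ : π / 2 < θ) (hθ' : θ ≤ π) (β : ℂ) :
    ∃ L : ℝ, ∀ (b : 𝔸) (M : ℝ), (0 : ℂ) ∈ resolventSet ℂ b →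
      (∀ w : ℂ, |w.im| ≤ θ → Complex.exp (α * w) ∈ resolventSet ℂ b) →
      (∀ w : ℂ, |w.im| ≤ θ → ‖resolvent b (Complex.exp (α * w))‖ ≤ M) →
      ‖mittagLeffler α β b - (Complex.Gamma (β - α))⁻¹ • resolvent b (0 : ℂ)‖ ≤
        L * (M * ‖resolvent b (0 : ℂ)‖) := by
  have hzero : 0 ≤ θ := by linarith [Real.pi_pos]
  have hadm (z : ℂ) := hankelAdmissible_hankelKernel hθ hθ' z
  obtain ⟨L, hL⟩ := exists_norm_hankelIntegral_le 𝔸 hzero (hadm (β - α - α)) 0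
  refine ⟨‖(2 * π * I : ℂ)‖⁻¹ * L, fun b M h0 hb hM => ?_⟩
  have hbound (w : ℂ) (hw : |w.im| ≤ θ) :
      ‖hankelKernel (β - α) w • resolvent b (Complex.exp (α * w)) +
        hankelKernel (β - α) w • -resolvent b (0 : ℂ)‖ ≤
      M * ‖resolvent b (0 : ℂ)‖ * ‖hankelKernel (β - α - α) w‖ := by
    rw [← smul_add, ← sub_eq_add_neg, resolvent_sub_resolvent_zero (hb w hw) h0, smul_neg,
      norm_neg, smul_smul, ← hankelKernel_sub, norm_smul, mul_comm]
    gcongr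
    exact (norm_mul_le _ _).trans (by gcongr; exact hM w hw)
  have hnorm := hL _ _ hbound
  rw [hankelIntegral_add hzero (hankelAdmissible_hankelKernel_smul_resolvent hθ hθ' _ hb hM)
      ((hadm _).smul_const _), hankelIntegral_resolvent_eq_smul_mittagLeffler hα hθ hθ' β hb hM,
    hankelIntegral_smul_const, hankelIntegral_hankelKernel hθ hθ', smul_neg,
    mul_smul (2 * π * I : ℂ) (Complex.Gamma _)⁻¹, ← sub_eq_add_neg, ← smul_sub, norm_smul,
    ← le_inv_mul_iff₀ (norm_pos_iff.2 Complex.two_pi_I_ne_zero)] at hnorm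
  refine hnorm.trans_eq ?_
  ring

theorem exists_norm_mittagLeffler_smul_sub_le (hα : 0 < α) (hθ : π / 2 < θ) (hθ' : θ ≤ π)
    (β : ℂ) {a : 𝔸} (ha : closedSector (α * θ) ⊆ resolventSet ℂ a) :
    ∃ C : ℝ, ∀ r : ℝ, 0 < r →
      ‖mittagLeffler α β ((r : ℂ) • a) -
        (Complex.Gamma (β - α))⁻¹ • (r : ℂ)⁻¹ • resolvent a (0 : ℂ)‖ ≤ C * r⁻¹ ^ 2 := by
  have hφ : 0 ≤ α * θ := mul_nonneg hα.le (by linarith [Real.pi_pos])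
  obtain ⟨M, hM⟩ := exists_norm_resolvent_le (isClosed_closedSector hφ) ha
  obtain ⟨L, hL⟩ := exists_norm_mittagLeffler_sub_le (𝔸 := 𝔸) hα hθ hθ' β
  refine ⟨L * (M * ‖resolvent a (0 : ℂ)‖), fun r hr => ?_⟩
  have hres (z : ℂ) := resolvent_smul (Complex.ofReal_ne_zero.2 hr.ne') a z
  have hscale {z : ℂ} (hz : z ∈ closedSector (α * θ)) : (r : ℂ)⁻¹ * z ∈ closedSector (α * θ) := by
    simpa using ofReal_mul_mem_closedSector (inv_pos.2 hr) hz
  have hset {z : ℂ} (hz : z ∈ closedSector (α * θ)) : z ∈ resolventSet ℂ ((r : ℂ) • a) := by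
    rw [spectrum.isUnit_resolvent, hres]
    have hr' : (r : ℂ)⁻¹ ≠ 0 := inv_ne_zero (Complex.ofReal_ne_zero.2 hr.ne')
    exact (spectrum.isUnit_resolvent.1 (ha (hscale hz))).smul (Units.mk0 _ hr')
  have hnorm {z : ℂ} (hz : z ∈ closedSector (α * θ)) :
      ‖resolvent ((r : ℂ) • a) z‖ ≤ r⁻¹ * M := by
    rw [hres, norm_smul, norm_inv, Complex.norm_real, Real.norm_of_nonneg hr.le]
    gcongr
    exact hM _ (hscale hz)
  have h := hL ((r : ℂ) • a) (r⁻¹ * M) (hset (zero_mem_closedSector hφ))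
    (fun w hw => hset (exp_mul_mem_closedSector hα.le hw))
    fun w hw => hnorm (exp_mul_mem_closedSector hα.le hw)
  rw [hres 0, mul_zero, norm_smul, norm_inv, Complex.norm_real, Real.norm_of_nonneg hr.le] at h
  exact h.trans_eq (by ring)

end MittagLeffler

section MatrixMittagLeffler

open Set
open scoped Real

attribute [local instance] Matrix.linftyOpNormedSpace Matrix.linftyOpNormedAlgebra

lemma norm_map_algebraMap_real_complex {n : Type*} [Fintype n] (M : Matrix n n ℝ) :
    ‖M.map (algebraMap ℝ ℂ)‖ = ‖M‖ := by
  simp [Matrix.linfty_opNorm_def]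

variable {s : ℕ} {α : ℝ} {A : Matrix (Fin s) (Fin s) ℝ}

lemma map_ML (α β : ℝ) (B : Matrix (Fin s) (Fin s) ℝ) :
    (ML α β B).map (algebraMap ℝ ℂ) = mittagLeffler α (β : ℂ) (B.map (algebraMap ℝ ℂ)) := by
  have hmap := Function.LeftInverse.map_tsum (L := .unconditional ℕ)
    (g := (algebraMap ℝ ℂ).mapMatrix (m := Fin s)) (g' := fun M => M.map Complex.re)
    (fun k : ℕ => (Real.Gamma (α * k + β))⁻¹ • B ^ k)
    (continuous_id.matrix_map Complex.continuous_ofReal)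
    (continuous_id.matrix_map Complex.continuous_re) fun M => by ext; simp
  refine hmap.trans (tsum_congr fun k => ?_)
  have hpow : (B ^ k).map (algebraMap ℝ ℂ) = B.map (algebraMap ℝ ℂ) ^ k :=
    map_pow (algebraMap ℝ ℂ).mapMatrix B k
  have hGamma : Complex.Gamma (α * k + β) = Real.Gamma (α * k + β) := by
    exact_mod_cast Complex.Gamma_ofReal (α * k + β)
  rw [← hpow, hGamma]
  ext
  simp

lemma continuous_ML (hα : 0 < α) (β : ℝ) :
    Continuous (ML α β : Matrix (Fin s) (Fin s) ℝ → Matrix (Fin s) (Fin s) ℝ) := by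
  have hre (B : Matrix (Fin s) (Fin s) ℝ) :
      (mittagLeffler α (β : ℂ) (B.map (algebraMap ℝ ℂ))).map Complex.re = ML α β B := by
    rw [← map_ML]
    ext
    simp
  refine Continuous.congr (Continuous.matrix_map ?_ Complex.continuous_re) hre
  exact (continuous_mittagLeffler hα β).comp (continuous_id.matrix_map Complex.continuous_ofReal)

lemma exists_closedSector_subset_resolventSet {n : Type*} [Fintype n] [DecidableEq n]
    {B : Matrix n n ℂ} (hB : ∀ μ ∈ spectrum ℂ B, α * π / 2 < |μ.arg|) :
    ∃ θ, π / 2 < θ ∧ θ ≤ π ∧ closedSector (α * θ) ⊆ resolventSet ℂ B := by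
  have hlt : ∀ᶠ θ in 𝓝[>] (π / 2), ∀ μ ∈ spectrum ℂ B, α * θ < |μ.arg| := by
    refine (eventually_all_finite B.finite_spectrum).2 fun μ hμ => ?_
    have hlim : Tendsto (fun θ => α * θ) (𝓝[>] (π / 2)) (𝓝 (α * (π / 2))) :=
      tendsto_nhdsWithin_of_tendsto_nhds (Continuous.tendsto (by fun_prop) _)
    exact hlim.eventually_lt_const (by linarith [hB μ hμ])
  obtain ⟨θ, hθ, hθ'⟩ := (hlt.and (Ioc_mem_nhdsGT (half_lt_self Real.pi_pos))).exists
  refine ⟨θ, hθ'.1, hθ'.2, fun z hz => ?_⟩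
  by_contra hmem
  exact (hθ z hmem).not_ge hz

-- The leading term `Γ(β - α)⁻¹ r⁻¹ • (-A)⁻¹` of the expansion at infinity vanishes for `β = α`.
lemma exists_norm_ML_smul_le_inv_sq (hα : 0 < α)
    (hA : ∀ μ ∈ spectrum ℂ (A.map (algebraMap ℝ ℂ)), α * π / 2 < |μ.arg|) :
    ∃ C : ℝ, ∀ r : ℝ, 0 < r → ‖ML α α (r • A)‖ ≤ C * r⁻¹ ^ 2 := by
  obtain ⟨θ, hθ, hθ', hres⟩ := exists_closedSector_subset_resolventSet hA
  obtain ⟨C, hC⟩ := exists_norm_mittagLeffler_smul_sub_le hα hθ hθ' α hres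
  refine ⟨C, fun r hr => ?_⟩
  have hsmul : (r • A).map (algebraMap ℝ ℂ) = (r : ℂ) • A.map (algebraMap ℝ ℂ) := by
    ext
    simp
  rw [← norm_map_algebraMap_real_complex, map_ML, hsmul]
  simpa using hC r hr

lemma exists_norm_ML_smul_le_min (hα : 0 < α)
    (hA : ∀ μ ∈ spectrum ℂ (A.map (algebraMap ℝ ℂ)), α * π / 2 < |μ.arg|) :
    ∃ C : ℝ, 0 ≤ C ∧ ∀ r : ℝ, 0 < r → ‖ML α α (r • A)‖ ≤ C * min 1 (r⁻¹ ^ 2) := by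
  obtain ⟨C, hC⟩ := exists_norm_ML_smul_le_inv_sq hα hA
  have hcont : Continuous fun r : ℝ => ML α α (r • A) := (continuous_ML hα α).comp (by fun_prop)
  obtain ⟨D, hD⟩ :=
    (isCompact_Icc (a := (0 : ℝ)) (b := 1)).exists_bound_of_continuousOn hcont.continuousOn
  have hD0 : 0 ≤ D := (norm_nonneg _).trans (hD 0 (by simp))
  refine ⟨max C D, hD0.trans (le_max_right _ _), fun r hr => ?_⟩
  rcases le_total r 1 with hr1 | hr1
  · rw [min_eq_left (one_le_pow₀ (one_le_inv₀ hr |>.2 hr1)), mul_one]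
    exact (hD r ⟨hr.le, hr1⟩).trans (le_max_right _ _)
  · rw [min_eq_right (pow_le_one₀ (by positivity) (inv_le_one_of_one_le₀ hr1))]
    exact (hC r hr).trans (by gcongr; exact le_max_left _ _)

end MatrixMittagLeffler

section CausalConvolution

open Set

lemma intervalIntegrable_one_sub_rpow_mul_rpow {a b : ℝ} (ha : 0 < a) (hb : 0 < b) :
    IntervalIntegrable (fun u : ℝ => (1 - u) ^ (a - 1) * u ^ (b - 1)) volume 0 1 := by
  have hbeta := (Complex.betaIntegral_convergent (u := b) (v := a) (by simpa) (by simpa)).norm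
  rw [intervalIntegrable_iff_integrableOn_Ioo_of_le zero_le_one] at hbeta ⊢
  refine hbeta.congr_fun (fun u hu => ?_) measurableSet_Ioo
  have hu' : 0 < 1 - u := sub_pos.2 hu.2
  have hcast : 1 - (u : ℂ) = ((1 - u : ℝ) : ℂ) := by push_cast; rfl
  simp only [norm_mul]
  rw [hcast, Complex.norm_cpow_eq_rpow_re_of_pos hu.1, Complex.norm_cpow_eq_rpow_re_of_pos hu',
    mul_comm]
  simp

lemma nonneg_of_norm_le_mul_rpow {E : Type*} [SeminormedAddCommGroup E] {f : ℝ → E} {a M x : ℝ}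
    (hx : 0 < x) (hf : ‖f x‖ ≤ M * x ^ a) : 0 ≤ M :=
  nonneg_of_mul_nonneg_left ((norm_nonneg _).trans hf) (Real.rpow_pos_of_pos hx a)

variable {E E' F : Type*} [NormedAddCommGroup E] [NormedSpace ℝ E] [NormedAddCommGroup E']
  [NormedSpace ℝ E'] [NormedAddCommGroup F] [NormedSpace ℝ F] (L : E →L[ℝ] E' →L[ℝ] F)

lemma integral_comp_sub_eq_smul_integral_unit (k : ℝ → E) (h : ℝ → E') (t : ℝ) :
    ∫ τ in (0 : ℝ)..t, L (k (t - τ)) (h τ) =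
      t • ∫ u in (0 : ℝ)..1, L (k (t * (1 - u))) (h (t * u)) := by
  simpa [mul_sub] using (intervalIntegral.smul_integral_comp_mul_left (a := 0) (b := 1)
    (fun τ => L (k (t - τ)) (h τ)) t).symm

variable {L} {k : ℝ → E} {h : ℝ → E'} {a b C M T : ℝ}

lemma norm_apply_scaled_le (hk : ∀ u ∈ Ioc 0 T, ‖k u‖ ≤ M * u ^ (a - 1))
    (hh : ∀ τ ∈ Ioc 0 T, ‖h τ‖ ≤ C * τ ^ (b - 1)) {t u : ℝ} (ht : t ∈ Ioc 0 T)
    (hu : u ∈ Ioo (0 : ℝ) 1) :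
    ‖L (k (t * (1 - u))) (h (t * u))‖ ≤
      ‖L‖ * M * C * t ^ (a + b - 2) * ((1 - u) ^ (a - 1) * u ^ (b - 1)) := by
  have hmem {v : ℝ} (hv : 0 < v) (hv' : v < 1) : t * v ∈ Ioc 0 T :=
    ⟨mul_pos ht.1 hv, (mul_le_of_le_one_right ht.1.le hv'.le).trans ht.2⟩
  have hu' : 0 < 1 - u := sub_pos.2 hu.2
  have hk' := hk _ (hmem hu' (by linarith [hu.1]))
  calc ‖L (k (t * (1 - u))) (h (t * u))‖
      ≤ ‖L‖ * ‖k (t * (1 - u))‖ * ‖h (t * u)‖ := L.le_opNorm₂ _ _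
    _ ≤ ‖L‖ * (M * (t * (1 - u)) ^ (a - 1)) * (C * (t * u) ^ (b - 1)) :=
        mul_le_mul (mul_le_mul_of_nonneg_left hk' (norm_nonneg L)) (hh _ (hmem hu.1 hu.2))
          (norm_nonneg _) (mul_nonneg (norm_nonneg L) ((norm_nonneg _).trans hk'))
    _ = ‖L‖ * M * C * (t ^ (a - 1) * t ^ (b - 1)) * ((1 - u) ^ (a - 1) * u ^ (b - 1)) := by
        rw [Real.mul_rpow ht.1.le hu'.le, Real.mul_rpow ht.1.le hu.1.le]
        ring
    _ = _ := by
        rw [← Real.rpow_add ht.1]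
        ring_nf

lemma ae_mem_Ioo_of_mem_uIoc {x y : ℝ} (hxy : x ≤ y) :
    ∀ᵐ u : ℝ, u ∈ uIoc x y → u ∈ Ioo x y := by
  filter_upwards [volume.ae_ne y] with u hu hmem
  rw [uIoc_of_le hxy] at hmem
  exact ⟨hmem.1, hmem.2.lt_of_ne hu⟩

lemma norm_integral_comp_sub_le (ha : 0 < a) (hb : 0 < b)
    (hk : ∀ u ∈ Ioc 0 T, ‖k u‖ ≤ M * u ^ (a - 1))
    (hh : ∀ τ ∈ Ioc 0 T, ‖h τ‖ ≤ C * τ ^ (b - 1)) {t : ℝ} (ht : t ∈ Ioc 0 T) :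
    ‖∫ τ in (0 : ℝ)..t, L (k (t - τ)) (h τ)‖ ≤
      ‖L‖ * M * C * (∫ u in (0 : ℝ)..1, (1 - u) ^ (a - 1) * u ^ (b - 1)) * t ^ (a + b - 1) := by
  have hunit : ‖∫ u in (0 : ℝ)..1, L (k (t * (1 - u))) (h (t * u))‖ ≤
      ∫ u in (0 : ℝ)..1,
        ‖L‖ * M * C * t ^ (a + b - 2) * ((1 - u) ^ (a - 1) * u ^ (b - 1)) := by
    refine intervalIntegral.norm_integral_le_of_norm_le zero_le_one ?_
      ((intervalIntegrable_one_sub_rpow_mul_rpow ha hb).const_mul _)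
    filter_upwards [ae_mem_Ioo_of_mem_uIoc (zero_le_one' ℝ)] with u hu hmem
    exact norm_apply_scaled_le hk hh ht (hu (by rwa [uIoc_of_le zero_le_one]))
  have hpow : t ^ (a + b - 1) = t * t ^ (a + b - 2) := by
    nth_rewrite 2 [← Real.rpow_one t]
    rw [← Real.rpow_add ht.1]
    ring_nf
  rw [intervalIntegral.integral_const_mul] at hunit
  rw [integral_comp_sub_eq_smul_integral_unit, norm_smul, Real.norm_of_nonneg ht.1.le, hpow]
  exact (mul_le_mul_of_nonneg_left hunit ht.1.le).trans_eq (by ring)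

lemma tendsto_rpow_smul_integral_comp_sub {c : ℝ} (ha : 0 < a) (hb : 0 < b) (hT : 0 < T)
    (hc : 0 < c + (a + b - 1)) (hk : ∀ u ∈ Ioc 0 T, ‖k u‖ ≤ M * u ^ (a - 1))
    (hh : ∀ τ ∈ Ioc 0 T, ‖h τ‖ ≤ C * τ ^ (b - 1)) :
    Tendsto (fun t : ℝ => t ^ c • ∫ τ in (0 : ℝ)..t, L (k (t - τ)) (h τ)) (𝓝[>] 0) (𝓝 0) := by
  set B := ∫ u in (0 : ℝ)..1, (1 - u) ^ (a - 1) * u ^ (b - 1)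
  have hlim : Tendsto (fun t : ℝ => ‖L‖ * M * C * B * t ^ (c + (a + b - 1))) (𝓝[>] 0) (𝓝 0) := by
    have hcont : Continuous fun t : ℝ => ‖L‖ * M * C * B * t ^ (c + (a + b - 1)) :=
      (Real.continuous_rpow_const hc.le).const_mul _
    simpa [Real.zero_rpow hc.ne'] using (hcont.tendsto 0).mono_left nhdsWithin_le_nhds
  refine squeeze_zero_norm' ?_ hlim
  filter_upwards [Ioc_mem_nhdsGT hT] with t ht
  have htc : 0 ≤ t ^ c := Real.rpow_nonneg ht.1.le c
  rw [norm_smul, Real.norm_of_nonneg htc, Real.rpow_add ht.1]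
  exact (mul_le_mul_of_nonneg_left (norm_integral_comp_sub_le ha hb hk hh ht) htc).trans_eq
    (by ring)

lemma continuousOn_integral_comp_sub (ha : 0 < a) (hb : 0 < b) (hkc : ContinuousOn k (Ioi 0))
    (hhc : ContinuousOn h (Ioi 0)) (hk : ∀ u ∈ Ioc 0 T, ‖k u‖ ≤ M * u ^ (a - 1))
    (hh : ∀ τ ∈ Ioc 0 T, ‖h τ‖ ≤ C * τ ^ (b - 1)) :
    ContinuousOn (fun t => ∫ τ in (0 : ℝ)..t, L (k (t - τ)) (h τ)) (Ioo 0 T) := by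
  have hcont {S : Set ℝ} {f g : ℝ → ℝ} (hf : ContinuousOn f S)
      (hg : ContinuousOn g S) (hf0 : MapsTo f S (Ioi 0)) (hg0 : MapsTo g S (Ioi 0)) :
      ContinuousOn (fun x => L (k (f x)) (h (g x))) S :=
    (L.continuous.comp_continuousOn (hkc.comp hf hf0)).clm_apply (hhc.comp hg hg0)
  intro t₀ ht₀
  have hM : 0 ≤ M := nonneg_of_norm_le_mul_rpow ht₀.1 (hk t₀ ⟨ht₀.1, ht₀.2.le⟩)
  have hC : 0 ≤ C := nonneg_of_norm_le_mul_rpow ht₀.1 (hh t₀ ⟨ht₀.1, ht₀.2.le⟩)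
  simp only [integral_comp_sub_eq_smul_integral_unit L k h]
  have hnear : ∀ᶠ t in 𝓝 t₀, t ∈ Ioc 0 T :=
    mem_of_superset (isOpen_Ioo.mem_nhds ht₀) Ioo_subset_Ioc_self
  have hpow : ∀ᶠ t in 𝓝 t₀, t ^ (a + b - 2) ≤ t₀ ^ (a + b - 2) + 1 :=
    (Real.continuousAt_rpow_const t₀ _ (.inl ht₀.1.ne')).eventually_le_const (lt_add_one _)
  refine (continuousAt_id.smul (intervalIntegral.continuousAt_of_dominated_interval
    (bound := fun u => ‖L‖ * M * C * (t₀ ^ (a + b - 2) + 1) * ((1 - u) ^ (a - 1) * u ^ (b - 1)))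
    ?_ ?_ ((intervalIntegrable_one_sub_rpow_mul_rpow ha hb).const_mul _)
    ?_)).continuousWithinAt
  · filter_upwards [hnear] with t ht
    rw [uIoc_of_le zero_le_one, ← restrict_Ioo_eq_restrict_Ioc]
    exact ContinuousOn.aestronglyMeasurable (hcont (f := fun u => t * (1 - u))
      (g := fun u => t * u) (by fun_prop) (by fun_prop)
      (fun u hu => mul_pos ht.1 (sub_pos.2 hu.2)) fun u hu => mul_pos ht.1 hu.1) measurableSet_Ioo
  · filter_upwards [hnear, hpow] with t ht htpow
    filter_upwards [ae_mem_Ioo_of_mem_uIoc (zero_le_one' ℝ)] with u hu hmem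
    have hu0 : 0 ≤ u := (hu hmem).1.le
    have hu1 : 0 ≤ 1 - u := sub_nonneg.2 (hu hmem).2.le
    exact (norm_apply_scaled_le hk hh ht (hu hmem)).trans (by gcongr)
  · filter_upwards [ae_mem_Ioo_of_mem_uIoc (zero_le_one' ℝ)] with u hu hmem
    exact ContinuousOn.continuousAt (hcont (f := fun t => t * (1 - u)) (g := fun t => t * u)
      (by fun_prop) (by fun_prop) (fun t ht => mul_pos ht (sub_pos.2 (hu hmem).2))
      fun t ht => mul_pos ht (hu hmem).1) (Ioi_mem_nhds ht₀.1)

-- For `τ ≤ t / 2` the decay of `k` makes up for the singularity of `h`; for `t / 2 ≤ τ` the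
-- factor `τ ^ (b - 1)` is comparable to `t ^ (b - 1)` and the integrability of `k` suffices.
lemma norm_apply_comp_sub_le (hb : b ≤ 1) (hk : ∀ u > 0, ‖k u‖ ≤ M * u⁻¹)
    (hh : ∀ τ > 0, ‖h τ‖ ≤ C * τ ^ (b - 1)) {t τ : ℝ} (hτ : τ ∈ Ioo 0 t) :
    ‖L (k (t - τ)) (h τ)‖ ≤
      ‖L‖ * C * (‖k (t - τ)‖ * (t / 2) ^ (b - 1) + M * (t / 2)⁻¹ * τ ^ (b - 1)) := by
  have hsub : 0 < t - τ := sub_pos.2 hτ.2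
  have ht : 0 < t / 2 := half_pos (hτ.1.trans hτ.2)
  have hC : 0 ≤ C := nonneg_of_norm_le_mul_rpow one_pos (hh 1 one_pos)
  have hk0 : 0 ≤ M * (t / 2)⁻¹ := (norm_nonneg _).trans (hk _ ht)
  have hM : 0 ≤ M := nonneg_of_mul_nonneg_left hk0 (inv_pos.2 ht)
  have hτ0 : 0 ≤ τ ^ (b - 1) := Real.rpow_nonneg hτ.1.le _
  have hsplit : ‖k (t - τ)‖ * τ ^ (b - 1) ≤
      ‖k (t - τ)‖ * (t / 2) ^ (b - 1) + M * (t / 2)⁻¹ * τ ^ (b - 1) := by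
    rcases le_total τ (t / 2) with hle | hle
    · refine le_add_of_nonneg_of_le (by positivity) (mul_le_mul_of_nonneg_right ?_ hτ0)
      exact (hk _ hsub).trans (by gcongr; linarith)
    · refine le_add_of_le_of_nonneg (mul_le_mul_of_nonneg_left ?_ (norm_nonneg _)) (by positivity)
      exact Real.rpow_le_rpow_of_nonpos ht hle (by linarith)
  calc ‖L (k (t - τ)) (h τ)‖ ≤ ‖L‖ * ‖k (t - τ)‖ * ‖h τ‖ := L.le_opNorm₂ _ _
    _ ≤ ‖L‖ * ‖k (t - τ)‖ * (C * τ ^ (b - 1)) := by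
        gcongr
        exact hh τ hτ.1
    _ = ‖L‖ * C * (‖k (t - τ)‖ * τ ^ (b - 1)) := by ring
    _ ≤ _ := by gcongr

lemma norm_integral_comp_sub_le_of_integrableOn (hb : 0 < b) (hb' : b ≤ 1)
    (hki : IntegrableOn k (Ioi 0)) (hk : ∀ u > 0, ‖k u‖ ≤ M * u⁻¹)
    (hh : ∀ τ > 0, ‖h τ‖ ≤ C * τ ^ (b - 1)) {t : ℝ} (ht : 0 < t) :
    ‖∫ τ in (0 : ℝ)..t, L (k (t - τ)) (h τ)‖ ≤ ‖L‖ * C *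
      ((∫ u in Ioi (0 : ℝ), ‖k u‖) * (t / 2) ^ (b - 1) + M * (t / 2)⁻¹ * (t ^ b / b)) := by
  have hC : 0 ≤ C := nonneg_of_norm_le_mul_rpow one_pos (hh 1 one_pos)
  have hkt : IntervalIntegrable k volume 0 t :=
    (intervalIntegrable_iff_integrableOn_Ioc_of_le ht.le).2 (hki.mono_set Ioc_subset_Ioi_self)
  have hkt' : IntervalIntegrable (fun τ => ‖k (t - τ)‖ * (t / 2) ^ (b - 1)) volume 0 t := by
    simpa using (hkt.norm.comp_sub_left t).symm.mul_const ((t / 2) ^ (b - 1))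
  have hpow : IntervalIntegrable (fun τ : ℝ => M * (t / 2)⁻¹ * τ ^ (b - 1)) volume 0 t :=
    (intervalIntegral.intervalIntegrable_rpow' (by linarith)).const_mul _
  have hle : ∫ τ in (0 : ℝ)..t, ‖k (t - τ)‖ ≤ ∫ u in Ioi (0 : ℝ), ‖k u‖ := by
    rw [intervalIntegral.integral_comp_sub_left (fun u => ‖k u‖), sub_self, sub_zero,
      intervalIntegral.integral_of_le ht.le]
    exact setIntegral_mono_set hki.norm (.of_forall fun _ => norm_nonneg _)
      Ioc_subset_Ioi_self.eventuallyLE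
  have hpt := intervalIntegral.norm_integral_le_of_norm_le (μ := volume) ht.le
    ((ae_mem_Ioo_of_mem_uIoc ht.le).mono fun τ hτ hmem =>
      norm_apply_comp_sub_le (L := L) hb' hk hh (hτ (by rwa [uIoc_of_le ht.le])))
    ((hkt'.add hpow).const_mul (‖L‖ * C))
  rw [intervalIntegral.integral_const_mul, intervalIntegral.integral_add hkt' hpow,
    intervalIntegral.integral_const_mul, intervalIntegral.integral_mul_const,
    integral_rpow (.inl (by linarith)), sub_add_cancel, Real.zero_rpow hb.ne', sub_zero] at hpt
  exact hpt.trans (by gcongr)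

lemma exists_rpow_mul_norm_integral_comp_sub_le (hb : 0 < b) (hb' : b ≤ 1)
    (hki : IntegrableOn k (Ioi 0)) (hk : ∀ u > 0, ‖k u‖ ≤ M * u⁻¹)
    (hh : ∀ τ > 0, ‖h τ‖ ≤ C * τ ^ (b - 1)) :
    ∃ D : ℝ, ∀ t > 0, t ^ (1 - b) * ‖∫ τ in (0 : ℝ)..t, L (k (t - τ)) (h τ)‖ ≤ D := by
  refine ⟨‖L‖ * C * ((∫ u in Ioi (0 : ℝ), ‖k u‖) * 2⁻¹ ^ (b - 1) + 2 * M * b⁻¹), fun t ht => ?_⟩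
  have hcancel : t ^ (1 - b) * t ^ (b - 1) = 1 := by rw [← Real.rpow_add ht]; simp
  have hcancel' : t ^ (1 - b) * t ^ b = t := by rw [← Real.rpow_add ht]; simp
  calc t ^ (1 - b) * ‖∫ τ in (0 : ℝ)..t, L (k (t - τ)) (h τ)‖
      ≤ t ^ (1 - b) * (‖L‖ * C *
          ((∫ u in Ioi (0 : ℝ), ‖k u‖) * (t / 2) ^ (b - 1) + M * (t / 2)⁻¹ * (t ^ b / b))) := by
        gcongr
        exact norm_integral_comp_sub_le_of_integrableOn hb hb' hki hk hh ht
    _ = ‖L‖ * C * ((∫ u in Ioi (0 : ℝ), ‖k u‖) * 2⁻¹ ^ (b - 1) * (t ^ (1 - b) * t ^ (b - 1)) +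
          M * (t / 2)⁻¹ * b⁻¹ * (t ^ (1 - b) * t ^ b)) := by
        rw [div_eq_mul_inv t 2, Real.mul_rpow ht.le (by norm_num)]
        ring
    _ = _ := by
        rw [hcancel, hcancel']
        field_simp

end CausalConvolution

section MittagLefflerKernel

open Set
open scoped Matrix Real

attribute [local instance] Matrix.linftyOpNormedSpace Matrix.linftyOpNormedAlgebra

lemma norm_le_mul_inv_of_norm_le_rpow {E : Type*} [SeminormedAddCommGroup E] {f : ℝ → E}
    {a b M : ℝ} (ha : 0 ≤ a) (hb : 0 ≤ b) (hfa : ∀ u > 0, ‖f u‖ ≤ M * u ^ (a - 1))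
    (hfb : ∀ u > 0, ‖f u‖ ≤ M * u ^ (-b - 1)) : ∀ u > 0, ‖f u‖ ≤ M * u⁻¹ := by
  intro u hu
  have hM : 0 ≤ M := nonneg_of_norm_le_mul_rpow hu (hfa u hu)
  rw [← Real.rpow_neg_one]
  rcases le_total u 1 with hu1 | hu1
  · exact (hfa u hu).trans (mul_le_mul_of_nonneg_left
      (Real.rpow_le_rpow_of_exponent_ge hu hu1 (by linarith)) hM)
  · exact (hfb u hu).trans (mul_le_mul_of_nonneg_left
      (Real.rpow_le_rpow_of_exponent_le hu1 (by linarith)) hM)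

lemma integrableOn_Ioi_of_norm_le_rpow {E : Type*} [NormedAddCommGroup E] {f : ℝ → E}
    {a b M : ℝ} (ha : 0 < a) (hb : 0 < b) (hf : ContinuousOn f (Ioi 0))
    (hfa : ∀ u > 0, ‖f u‖ ≤ M * u ^ (a - 1)) (hfb : ∀ u > 0, ‖f u‖ ≤ M * u ^ (-b - 1)) :
    IntegrableOn f (Ioi 0) := by
  have hmeas {S : Set ℝ} (hS : MeasurableSet S) (hS0 : S ⊆ Ioi 0) :
      AEStronglyMeasurable f (volume.restrict S) := (hf.mono hS0).aestronglyMeasurable hS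
  rw [← Ioc_union_Ioi_eq_Ioi zero_le_one]
  refine IntegrableOn.union ?_ ?_
  · have hpow : IntegrableOn (fun u : ℝ => u ^ (a - 1)) (Ioc 0 1) :=
      (intervalIntegrable_iff_integrableOn_Ioc_of_le zero_le_one).1
        (intervalIntegral.intervalIntegrable_rpow' (by linarith))
    refine (hpow.const_mul M).mono' (hmeas measurableSet_Ioc Ioc_subset_Ioi_self) ?_
    filter_upwards [ae_restrict_mem measurableSet_Ioc] with u hu using hfa u hu.1
  · have hpow : IntegrableOn (fun u : ℝ => u ^ (-b - 1)) (Ioi 1) :=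
      integrableOn_Ioi_rpow_of_lt (by linarith) one_pos
    refine (hpow.const_mul M).mono' (hmeas measurableSet_Ioi (Ioi_subset_Ioi zero_le_one)) ?_
    filter_upwards [ae_restrict_mem measurableSet_Ioi] with u hu using hfb u (one_pos.trans hu)

variable {s : ℕ} {α : ℝ} {A : Matrix (Fin s) (Fin s) ℝ}

/-- The kernel `u ^ (α - 1) E_{α,α}(u ^ α A)` of the variation-of-constants formula. -/
noncomputable def mittagLefflerKernel (α : ℝ) (A : Matrix (Fin s) (Fin s) ℝ) (u : ℝ) :
    Matrix (Fin s) (Fin s) ℝ :=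
  u ^ (α - 1) • ML α α (u ^ α • A)

lemma continuous_ML_rpow_smul (hα : 0 < α) (A : Matrix (Fin s) (Fin s) ℝ) :
    Continuous fun u : ℝ => ML α α (u ^ α • A) :=
  (continuous_ML hα α).comp ((Real.continuous_rpow_const hα.le).smul continuous_const)

lemma continuousOn_mittagLefflerKernel (hα : 0 < α) (A : Matrix (Fin s) (Fin s) ℝ) :
    ContinuousOn (mittagLefflerKernel α A) (Ioi 0) :=
  (continuousOn_id.rpow_const fun _ hu => .inl (ne_of_gt hu)).smul
    (continuous_ML_rpow_smul hα A).continuousOn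

lemma exists_norm_mittagLefflerKernel_le (hα : 0 < α)
    (hA : ∀ μ ∈ spectrum ℂ (A.map (algebraMap ℝ ℂ)), α * π / 2 < |μ.arg|) :
    ∃ M : ℝ, (∀ u > 0, ‖mittagLefflerKernel α A u‖ ≤ M * u ^ (α - 1)) ∧
      ∀ u > 0, ‖mittagLefflerKernel α A u‖ ≤ M * u ^ (-α - 1) := by
  obtain ⟨C, hC0, hC⟩ := exists_norm_ML_smul_le_min hα hA
  have hmin (u : ℝ) (hu : 0 < u) : ‖mittagLefflerKernel α A u‖ ≤
      u ^ (α - 1) * (C * min 1 ((u ^ α)⁻¹ ^ 2)) := by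
    rw [mittagLefflerKernel, norm_smul, Real.norm_of_nonneg (by positivity)]
    gcongr
    exact hC _ (by positivity)
  refine ⟨C, fun u hu => (hmin u hu).trans ?_, fun u hu => (hmin u hu).trans ?_⟩
  · rw [mul_comm]
    gcongr
    exact mul_le_of_le_one_right hC0 (min_le_left _ _)
  · have hpow : u ^ (-α - 1) = u ^ (α - 1) * (u ^ α)⁻¹ ^ 2 := by
      rw [← Real.rpow_neg hu.le, ← Real.rpow_mul_natCast hu.le, ← Real.rpow_add hu]
      push_cast
      ring_nf
    rw [hpow, mul_left_comm]
    gcongr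
    exact min_le_right _ _

/-- The matrix-vector product as a continuous bilinear map. -/
noncomputable def mulVecCLM (n : Type*) [Fintype n] :
    Matrix n n ℝ →L[ℝ] (n → ℝ) →L[ℝ] n → ℝ :=
  LinearMap.mkContinuous₂ (Matrix.mulVecBilin ℝ ℝ) 1 fun M v => by
    simpa using Matrix.linfty_opNorm_mulVec M v

lemma mulVecCLM_apply {n : Type*} [Fintype n] (M : Matrix n n ℝ) (v : n → ℝ) :
    mulVecCLM n M v = M *ᵥ v := rfl

lemma continuousOn_mulVec {n : Type*} [Fintype n] {M : ℝ → Matrix n n ℝ} {v : ℝ → n → ℝ}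
    {S : Set ℝ} (hM : ContinuousOn M S) (hv : ContinuousOn v S) :
    ContinuousOn (fun t => M t *ᵥ v t) S :=
  ((mulVecCLM n).continuous.comp_continuousOn hM).clm_apply hv

lemma memC0inf_of_forall_pos_le {x : ℝ → Fin s → ℝ} {C : ℝ} {l : Fin s → ℝ}
    (hx : ContinuousOn x (Ioi 0)) (hl : Tendsto (fun t : ℝ => t ^ (1 - α) • x t) (𝓝[>] 0) (𝓝 l))
    (hC : ∀ t > 0, t ^ (1 - α) * ‖x t‖ ≤ C) : memC0inf α x := by
  refine ⟨hx, ⟨l, hl⟩, max (0 ^ (1 - α) * ‖x 0‖) C, fun t ht => ?_⟩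
  rcases ht.eq_or_lt with rfl | ht
  · exact le_max_left _ _
  · exact (hC t ht).trans (le_max_right _ _)

lemma memC0inf.add {x y : ℝ → Fin s → ℝ} (hx : memC0inf α x) (hy : memC0inf α y) :
    memC0inf α (fun t => x t + y t) := by
  obtain ⟨hxc, ⟨l, hl⟩, C, hC⟩ := hx
  obtain ⟨hyc, ⟨m, hm⟩, D, hD⟩ := hy
  refine ⟨hxc.add hyc, ⟨l + m, by simpa only [smul_add] using hl.add hm⟩, C + D, fun t ht => ?_⟩
  calc t ^ (1 - α) * ‖x t + y t‖ ≤ t ^ (1 - α) * (‖x t‖ + ‖y t‖) := by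
        gcongr
        exact norm_add_le _ _
    _ ≤ C + D := by
        rw [mul_add]
        exact add_le_add (hC t ht) (hD t ht)

lemma rpow_one_sub_mul_rpow_sub_one {t : ℝ} (ht : 0 < t) (α : ℝ) :
    t ^ (1 - α) * t ^ (α - 1) = 1 := by
  rw [← Real.rpow_add ht, sub_add_sub_cancel, sub_self, Real.rpow_zero]

lemma memC0inf_mittagLefflerKernel_mulVec (hα : 0 < α)
    (hA : ∀ μ ∈ spectrum ℂ (A.map (algebraMap ℝ ℂ)), α * π / 2 < |μ.arg|) (x₀ : Fin s → ℝ) :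
    memC0inf α fun t => mittagLefflerKernel α A t *ᵥ x₀ := by
  obtain ⟨M, hM, -⟩ := exists_norm_mittagLefflerKernel_le hα hA
  refine memC0inf_of_forall_pos_le (l := ML α α ((0 : ℝ) ^ α • A) *ᵥ x₀) (C := M * ‖x₀‖)
    (continuousOn_mulVec (continuousOn_mittagLefflerKernel hα A) continuousOn_const) ?_
    fun t ht => ?_
  · refine Tendsto.congr' ?_ ((((continuous_ML_rpow_smul hα A).matrix_mulVec
      continuous_const).tendsto 0).mono_left nhdsWithin_le_nhds)
    filter_upwards [self_mem_nhdsWithin] with t ht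
    rw [mittagLefflerKernel, Matrix.smul_mulVec, smul_smul, rpow_one_sub_mul_rpow_sub_one ht,
      one_smul]
  · calc t ^ (1 - α) * ‖mittagLefflerKernel α A t *ᵥ x₀‖
        ≤ t ^ (1 - α) * (M * t ^ (α - 1) * ‖x₀‖) := by
          gcongr
          exact (Matrix.linfty_opNorm_mulVec _ _).trans (by gcongr; exact hM t ht)
      _ = (t ^ (1 - α) * t ^ (α - 1)) * (M * ‖x₀‖) := by ring
      _ = M * ‖x₀‖ := by rw [rpow_one_sub_mul_rpow_sub_one ht, one_mul]

lemma memC0inf_integral_mittagLefflerKernel_mulVec {b D : ℝ} (hα : 0 < α) (hb : 0 < b)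
    (hA : ∀ μ ∈ spectrum ℂ (A.map (algebraMap ℝ ℂ)), α * π / 2 < |μ.arg|)
    {h : ℝ → Fin s → ℝ} (hh : ContinuousOn h (Ioi 0))
    (hloc : ∀ T, ∃ C, ∀ τ ∈ Ioc 0 T, ‖h τ‖ ≤ C * τ ^ (b - 1))
    (hD : ∀ t > 0, t ^ (1 - α) *
      ‖∫ τ in (0 : ℝ)..t, mittagLefflerKernel α A (t - τ) *ᵥ h τ‖ ≤ D) :
    memC0inf α fun t => ∫ τ in (0 : ℝ)..t, mittagLefflerKernel α A (t - τ) *ᵥ h τ := by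
  obtain ⟨M, hM, -⟩ := exists_norm_mittagLefflerKernel_le hα hA
  simp only [← mulVecCLM_apply] at hD ⊢
  refine memC0inf_of_forall_pos_le (fun t ht => ?_) (l := 0) ?_ hD
  · obtain ⟨C, hC⟩ := hloc (t + 1)
    exact ((continuousOn_integral_comp_sub hα hb (continuousOn_mittagLefflerKernel hα A) hh
      (fun u hu => hM u hu.1) hC).continuousAt
        (Ioo_mem_nhds ht (lt_add_one t))).continuousWithinAt
  · obtain ⟨C, hC⟩ := hloc 1
    exact tendsto_rpow_smul_integral_comp_sub hα hb one_pos (by linarith)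
      (fun u hu => hM u hu.1) hC

lemma memC0inf_integral_of_norm_le_rpow (hα : 0 < α) (hα1 : α ≤ 1)
    (hA : ∀ μ ∈ spectrum ℂ (A.map (algebraMap ℝ ℂ)), α * π / 2 < |μ.arg|)
    {h : ℝ → Fin s → ℝ} {C : ℝ} (hh : ContinuousOn h (Ioi 0))
    (hC : ∀ τ > 0, ‖h τ‖ ≤ C * τ ^ (α - 1)) :
    memC0inf α fun t => ∫ τ in (0 : ℝ)..t, mittagLefflerKernel α A (t - τ) *ᵥ h τ := by
  obtain ⟨M, hM, hM'⟩ := exists_norm_mittagLefflerKernel_le hα hA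
  obtain ⟨D, hD⟩ := exists_rpow_mul_norm_integral_comp_sub_le (L := mulVecCLM (Fin s)) hα hα1
    (integrableOn_Ioi_of_norm_le_rpow hα hα (continuousOn_mittagLefflerKernel hα A) hM hM')
    (norm_le_mul_inv_of_norm_le_rpow hα.le hα.le hM hM') hC
  exact memC0inf_integral_mittagLefflerKernel_mulVec hα hα hA hh
    (fun T => ⟨C, fun τ hτ => hC τ hτ.1⟩) hD

lemma memC0inf_integral_of_integral_norm_le (hα : 0 < α)
    (hA : ∀ μ ∈ spectrum ℂ (A.map (algebraMap ℝ ℂ)), α * π / 2 < |μ.arg|)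
    {g : ℝ → Fin s → ℝ} {D : ℝ} (hg : ContinuousOn g (Ici 0))
    (hD : ∀ t > 0, t ^ (1 - α) *
      ∫ τ in (0 : ℝ)..t, (t - τ) ^ (α - 1) * ‖ML α α ((t - τ) ^ α • A) *ᵥ g τ‖ ≤ D) :
    memC0inf α fun t => ∫ τ in (0 : ℝ)..t, mittagLefflerKernel α A (t - τ) *ᵥ g τ := by
  have hloc (T : ℝ) : ∃ C, ∀ τ ∈ Ioc 0 T, ‖g τ‖ ≤ C * τ ^ ((1 : ℝ) - 1) := by
    obtain ⟨C, hC⟩ := isCompact_Icc.exists_bound_of_continuousOn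
      (hg.mono (Icc_subset_Ici_self : Icc 0 T ⊆ Ici 0))
    exact ⟨C, fun τ hτ => by simpa using hC τ (Ioc_subset_Icc_self hτ)⟩
  refine memC0inf_integral_mittagLefflerKernel_mulVec hα one_pos hA
    (hg.mono Ioi_subset_Ici_self) hloc fun t ht => (mul_le_mul_of_nonneg_left ?_
      (by positivity)).trans (hD t ht)
  refine (intervalIntegral.norm_integral_le_integral_norm ht.le).trans_eq
    (intervalIntegral.integral_congr fun τ hτ => ?_)
  have hsub : 0 ≤ t - τ := sub_nonneg.2 (uIcc_of_le ht.le ▸ hτ).2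
  simp only [mittagLefflerKernel, Matrix.smul_mulVec, norm_smul,
    Real.norm_of_nonneg (Real.rpow_nonneg hsub _)]

lemma Tfull_eq (α : ℝ) (A : Matrix (Fin s) (Fin s) ℝ) (Q : ℝ → Matrix (Fin s) (Fin s) ℝ)
    (g : ℝ → Fin s → ℝ) (x₀ : Fin s → ℝ) (ξ : ℝ → Fin s → ℝ) :
    Tfull α A Q g x₀ ξ = fun t => mittagLefflerKernel α A t *ᵥ x₀ +
      (∫ τ in (0 : ℝ)..t, mittagLefflerKernel α A (t - τ) *ᵥ Q τ *ᵥ ξ τ) +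
      ∫ τ in (0 : ℝ)..t, mittagLefflerKernel α A (t - τ) *ᵥ g τ := by
  funext t
  simp only [Tfull, mittagLefflerKernel, Matrix.mulVec_mulVec, Matrix.smul_mul, Matrix.smul_mulVec]

lemma norm_mulVec_le_rpow {Q : ℝ → Matrix (Fin s) (Fin s) ℝ} {ξ : ℝ → Fin s → ℝ} {c C : ℝ}
    (hQ : ∀ t > 0, ‖Q t‖ ≤ c) (hξ : ∀ t > 0, t ^ (1 - α) * ‖ξ t‖ ≤ C) :
    ∀ t > 0, ‖Q t *ᵥ ξ t‖ ≤ c * C * t ^ (α - 1) := by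
  intro t ht
  have hξt : ‖ξ t‖ ≤ C * t ^ (α - 1) := by
    calc ‖ξ t‖ = t ^ (1 - α) * ‖ξ t‖ * t ^ (α - 1) := by
          rw [mul_right_comm, rpow_one_sub_mul_rpow_sub_one ht, one_mul]
      _ ≤ C * t ^ (α - 1) := by
          gcongr
          exact hξ t ht
  calc ‖Q t *ᵥ ξ t‖ ≤ ‖Q t‖ * ‖ξ t‖ := Matrix.linfty_opNorm_mulVec _ _
    _ ≤ c * (C * t ^ (α - 1)) :=
        mul_le_mul (hQ t ht) hξt (norm_nonneg _) ((norm_nonneg _).trans (hQ t ht))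
    _ = c * C * t ^ (α - 1) := by ring

theorem stmt18_general (hα : 0 < α) (hα1 : α ≤ 1)
    (hA : ∀ μ ∈ spectrum ℂ (A.map (algebraMap ℝ ℂ)), α * π / 2 < |μ.arg|)
    {Q : ℝ → Matrix (Fin s) (Fin s) ℝ} {c : ℝ} (hQ : ContinuousOn Q (Ioi 0))
    (hc : ∀ t > 0, ‖Q t‖ ≤ c) {g : ℝ → Fin s → ℝ} {D : ℝ} (hg : ContinuousOn g (Ici 0))
    (hD : ∀ t > 0, t ^ (1 - α) *
      ∫ τ in (0 : ℝ)..t, (t - τ) ^ (α - 1) * ‖ML α α ((t - τ) ^ α • A) *ᵥ g τ‖ ≤ D)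
    (x₀ : Fin s → ℝ) {ξ : ℝ → Fin s → ℝ} {C : ℝ} (hξ : ContinuousOn ξ (Ioi 0))
    (hC : ∀ t > 0, t ^ (1 - α) * ‖ξ t‖ ≤ C) : memC0inf α (Tfull α A Q g x₀ ξ) := by
  rw [Tfull_eq]
  exact ((memC0inf_mittagLefflerKernel_mulVec hα hA x₀).add
    (memC0inf_integral_of_norm_le_rpow hα hα1 hA (continuousOn_mulVec hQ hξ)
      (norm_mulVec_le_rpow hc hC))).add (memC0inf_integral_of_integral_norm_le hα hA hg hD)

end MittagLefflerKernel

theorem stmt18 (α : ℝ) (hα0 : 0 < α) (hα1 : α < 1) (s : ℕ)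
    (A : Matrix (Fin s) (Fin s) ℝ)
    (hspec : ∀ μ ∈ spectrum ℂ (A.map (algebraMap ℝ ℂ)),
      μ ≠ 0 ∧ α * Real.pi / 2 < |Complex.arg μ|)
    (Q : ℝ → Matrix (Fin s) (Fin s) ℝ) (hQc : ContinuousOn Q (Set.Ici 0))
    (hQbd : ∃ c : ℝ, ∀ t : ℝ, 0 ≤ t → ‖Q t‖ ≤ c)
    (g : ℝ → (Fin s → ℝ)) (hgc : ContinuousOn g (Set.Ici 0))
    (hgint : ∃ C : ℝ, ∀ t : ℝ, 0 ≤ t →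
      t ^ (1 - α) * ∫ τ in (0:ℝ)..t,
        (t - τ) ^ (α - 1) * ‖(ML α α ((t - τ) ^ α • A)).mulVec (g τ)‖ ≤ C)
    (x₀ : Fin s → ℝ) :
    ∀ ξ : ℝ → (Fin s → ℝ), memC0inf α ξ → memC0inf α (Tfull α A Q g x₀ ξ) := by
  obtain ⟨c, hc⟩ := hQbd
  obtain ⟨D, hD⟩ := hgint
  rintro ξ ⟨hξ, -, C, hC⟩
  exact stmt18_general hα0 hα1.le (fun μ hμ => (hspec μ hμ).2)
    (hQc.mono Set.Ioi_subset_Ici_self) (fun t ht => hc t ht.le) hgc (fun t ht => hD t ht.le) x₀ hξ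
    fun t ht => hC t ht.le
end
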